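/- arXiv:2403.02030 — 7 statements merged into one kernel-verified Lean document; each statement's English description precedes it below -/
import Mathlib

section
/- Let P₁, P₂, P₃ ∈ ℝ² be three non-aligned points (not lying on a common affine line). The following are equivalent: (i) the set of points Q ∈ ℝ² such that the Euclidean distances d(Q,P₁), d(Q,P₂), d(Q,P₃) are all rational is dense in ℝ² for the Euclidean topology; (ii) the quadratic form (x,y) ↦ ‖x·(P₃−P₁) + y·(P₃−P₂)‖² has all three coefficients ‖P₃−P₁‖², ⟨P₃−P₁, P₃−P₂⟩, ‖P₃−P₂‖² rational, and there exist x, y, z ∈ ℚ with z ≠ 0 such that ‖x·(P₃−P₁) + y·(P₃−P₂)‖² = z²; (iii) all six squared distances d(Pᵢ,Pⱼ)² (i,j ∈ {1,2,3}) are rational and there exists at least one point Q ∈ ℝ² with d(Q,P₁), d(Q,P₂), d(Q,P₃) all rational. -/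
/-!
The three conditions share the rationality of the Gram matrix of `P₃ - P₁` and `P₃ - P₂`, which is
equivalent to that of the squared distances. Density forces it (`gram_isRat`): in suitable rational
coordinates of the points `Q`, the squared distance to `P₃` is a quadratic polynomial with rational
values on a dense set, so every `ℚ`-linear functional on `ℝ` killing `1` kills its quadratic
coefficients. Once the Gram matrix is rational, a point with three rational distances has rational
coordinates relative to `P₃`, hence gives a represented square (`exists_rep`).

The substantial implication is that a represented square gives density. Scaling the represented
vector to length one and completing it to an orthogonal basis turns the plane into `ℝ²` with the norm
`√(p² + d r²)`, `d` rational, with `P₃ = 0` and the two other points `a`, `b` rational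
(`dense_of_rep`). The conic `p² + d r² = 1` has a rational parametrization `x ↦ c(x)`. On the line
`t ↦ t c(x)` with `x` and `t` rational the distance to `P₃` is automatically rational, and the
squared distances to `a` and `b` are monic quadratics `q₁`, `q₂` in `t`.

A confocal ellipse or hyperbola with foci `a`, `b` meets such a line in two points, and if one of
them has rational distances to the foci, so does the other (`Par.RatPar.ratAt_inv`). This yields two
involutions of the line. Geometrically they come from the genus one curve `w² = q₁ q₂`: the integral
`T` of the invariant differential `dt / w` conjugates them to the reflections `T ↦ Om - T` and
`T ↦ T(t₁) - T` (mod `Om`), where `Om` is the full integral and `t₁` is the rational point exchanged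
with infinity (`Par.Good.T_ell`, `Par.Good.T_hyp`). Their composition is a rotation of the circle
`ℝ / Om ℤ` by `± T(t₁)`, so the orbit of `t₁` is dense in the line unless `T(t₁)` is torsion
(`Par.Good.dense_of_not_tors`).

Torsion is excluded for transcendental `x`. That the orbit closes after `n` steps is an identity of
rational functions in `x`, so it holds for all transcendental `x` as soon as it holds for one
(`Cfg.alg_transfer`). But when the line approaches the one through `a`, the integral `Om` diverges
logarithmically because `q₁` acquires a double root, while `T(t₁)` or `Om - T(t₁)` stays bounded
(`Par.degenerate`), so the order of torsion exceeds any bound. Finally, the involutions are continuous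
in `(x, t)`, so the closure of the set of rational points `(x, t)` with rational distances is
invariant under them; it contains the vertical lines over all transcendental `x`, hence everything
(`Cfg.dense_pts`).
-/

open scoped RealInnerProductSpace

noncomputable section

/-- A real number is rational. -/
def IsRat (x : ℝ) : Prop := ∃ q : ℚ, (q : ℝ) = x

open Filter Topology Set

namespace RatDist

/-! ### The pair of quadratics on a line -/

/-- Coefficients of the two monic quadratics `q₁ t = t² - 2 s₁ t + n₁` and
`q₂ t = t² - 2 s₂ t + n₂`, the squared distances from the point `t • c` (with `c` a unit vector)
to two fixed points. -/
structure Par (K : Type*) where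
  s₁ : K
  s₂ : K
  n₁ : K
  n₂ : K

namespace Par

section Alg
variable {K : Type*} [Field K] (P : Par K)

def q₁ (t : K) : K := t ^ 2 - 2 * P.s₁ * t + P.n₁
def q₂ (t : K) : K := t ^ 2 - 2 * P.s₂ * t + P.n₂
def sig : K := P.s₁ - P.s₂
def nu : K := P.n₁ - P.n₂

/-- `D F * t² + B F * t + C F = 0` is the equation of the points at which the sum or the difference
of the distances has square `F`; see `quad_eq`. -/
def D (F : K) : K := P.sig ^ 2 - F
def B (F : K) : K := (P.s₁ + P.s₂) * F - P.sig * P.nu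
def C (F : K) : K := ((F + P.nu) ^ 2 - 4 * F * P.n₁) / 4

/-- The second root of `D F * t² + B F * t + C F`, given a root `t`. -/
def kap (F t : K) : K := -P.B F / P.D F - t

/-- The involution of the curve `w² = q₁ q₂` fixing `F = q₁ + q₂ + 2 ε w`, for `ε = ±1`: it moves a
point of a line to the second intersection with the ellipse (`ε = 1`) or the hyperbola (`ε = -1`)
through it which has its foci at the two fixed points. -/
def step (ε : K) (p : K × K) : K × K :=
  let F := P.q₁ p.1 + P.q₂ p.1 + 2 * ε * p.2
  let t := P.kap F p.1
  (t, ε * (F - P.q₁ t - P.q₂ t) / 2)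

/-- The point which the hyperbolic involution exchanges with the point at infinity. -/
def t₁ : K := -P.C (P.sig ^ 2) / P.B (P.sig ^ 2)

/-- The successive translates of `t₁` under the composition of the two involutions. -/
def orb : ℕ → K × K
  | 0 => (P.t₁, (P.q₁ P.t₁ + P.q₂ P.t₁ - P.sig ^ 2) / 2)
  | n + 1 => P.step (-1) (P.step 1 (orb n))

def map {K' : Type*} (φ : K → K') : Par K' := ⟨φ P.s₁, φ P.s₂, φ P.n₁, φ P.n₂⟩

section Map
variable {K' : Type*} [Field K'] (φ : K →+* K')

lemma map_q₁ (t : K) : (P.map φ).q₁ (φ t) = φ (P.q₁ t) := by simp [q₁, map, map_ofNat φ 2]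
lemma map_q₂ (t : K) : (P.map φ).q₂ (φ t) = φ (P.q₂ t) := by simp [q₂, map, map_ofNat φ 2]
lemma map_sig : (P.map φ).sig = φ P.sig := by simp [sig, map]
lemma map_nu : (P.map φ).nu = φ P.nu := by simp [nu, map]
lemma map_D (t : K) : (P.map φ).D (φ t) = φ (P.D t) := by simp [D, map_sig]
lemma map_B (t : K) : (P.map φ).B (φ t) = φ (P.B t) := by
  simp [B, map_sig, map_nu]; simp [map]
lemma map_C (t : K) : (P.map φ).C (φ t) = φ (P.C t) := by
  simp [C, map_nu, map_ofNat φ 4]; simp [map]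
lemma map_kap (F t : K) : (P.map φ).kap (φ F) (φ t) = φ (P.kap F t) := by
  simp [kap, map_B, map_D]
lemma map_t₁ : (P.map φ).t₁ = φ P.t₁ := by
  simp only [t₁, map_sig, ← map_pow, map_B, map_C, map_div₀, map_neg]
lemma map_step (ε : K) (p : K × K) :
    (P.map φ).step (φ ε) (φ p.1, φ p.2) = (φ (P.step ε p).1, φ (P.step ε p).2) := by
  have h : φ (P.q₁ p.1) + φ (P.q₂ p.1) + 2 * φ ε * φ p.2 =
      φ (P.q₁ p.1 + P.q₂ p.1 + 2 * ε * p.2) := by simp [map_ofNat φ 2]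
  simp only [step, map_q₁, map_q₂, h, map_kap]
  simp [map_ofNat φ 2]
lemma map_orb (n : ℕ) : (P.map φ).orb n = (φ (P.orb n).1, φ (P.orb n).2) := by
  induction n with
  | zero => simp [orb, map_t₁, map_q₁, map_q₂, map_sig, map_ofNat φ 2]
  | succ n ih =>
    have h1 := P.map_step φ 1 (P.orb n)
    have h2 := P.map_step φ (-1) (P.step 1 (P.orb n))
    simp only [map_neg, map_one] at h1 h2
    simp only [orb, ih, h1, h2]
end Map

lemma quad_eq [CharZero K] (F t : K) :
    F ^ 2 - 2 * F * (P.q₁ t + P.q₂ t) + (P.q₁ t - P.q₂ t) ^ 2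
      = 4 * (P.D F * t ^ 2 + P.B F * t + P.C F) := by
  simp only [q₁, q₂, D, B, C, sig, nu]; field_simp; ring

lemma quad_kap {F t : K} (hD : P.D F ≠ 0) (h : P.D F * t ^ 2 + P.B F * t + P.C F = 0) :
    P.D F * P.kap F t ^ 2 + P.B F * P.kap F t + P.C F = 0 := by
  rw [← h, kap]; field_simp; ring

lemma quad_t₁ (hB : P.B (P.sig ^ 2) ≠ 0) :
    P.D (P.sig ^ 2) * P.t₁ ^ 2 + P.B (P.sig ^ 2) * P.t₁ + P.C (P.sig ^ 2) = 0 := by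
  simp only [t₁, D]; field_simp; ring

end Alg

/-! ### The real involutions -/

/-- Nondegenerate data. The last clause says that `l`, the squared distance between the two fixed
points, separates the square of the difference of the two distances from that of their sum, with
equality only where `k * t + m` vanishes (Heron's formula). -/
structure Good (P : Par ℝ) : Prop where
  h₁ : P.s₁ ^ 2 < P.n₁
  h₂ : P.s₂ ^ 2 < P.n₂
  hB : P.B (P.sig ^ 2) ≠ 0
  heron : ∃ l k m : ℝ, k ≠ 0 ∧ P.sig ^ 2 < l ∧
    ∀ t, 2 * l * (P.q₁ t + P.q₂ t) - l ^ 2 - (P.q₁ t - P.q₂ t) ^ 2 = 4 * (k * t + m) ^ 2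

variable {P : Par ℝ}

def W (P : Par ℝ) (t : ℝ) : ℝ := √(P.q₁ t * P.q₂ t)

/-- For `ε = 1` or `ε = -1`, the square of the sum or of the difference of the two distances. -/
def Fe (P : Par ℝ) (ε t : ℝ) : ℝ := P.q₁ t + P.q₂ t + 2 * ε * P.W t

/-- The second point of the line with the same value of `Fe ε`. -/
def inv (P : Par ℝ) (ε t : ℝ) : ℝ := P.kap (P.Fe ε t) t

lemma Good.q₁_pos (h : P.Good) (t : ℝ) : 0 < P.q₁ t := by
  have := h.h₁; simp only [q₁]; nlinarith [sq_nonneg (t - P.s₁)]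
lemma Good.q₂_pos (h : P.Good) (t : ℝ) : 0 < P.q₂ t := by
  have := h.h₂; simp only [q₂]; nlinarith [sq_nonneg (t - P.s₂)]
lemma Good.W_pos (h : P.Good) (t : ℝ) : 0 < P.W t :=
  Real.sqrt_pos.2 (mul_pos (h.q₁_pos t) (h.q₂_pos t))
lemma Good.W_sq (h : P.Good) (t : ℝ) : P.W t ^ 2 = P.q₁ t * P.q₂ t :=
  Real.sq_sqrt (mul_pos (h.q₁_pos t) (h.q₂_pos t)).le

lemma Good.Fe_root (h : P.Good) {ε : ℝ} (hε : ε ^ 2 = 1) (t : ℝ) :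
    P.D (P.Fe ε t) * t ^ 2 + P.B (P.Fe ε t) * t + P.C (P.Fe ε t) = 0 := by
  have h1 := P.quad_eq (P.Fe ε t) t
  have h2 := h.W_sq t
  have : (P.Fe ε t) ^ 2 - 2 * (P.Fe ε t) * (P.q₁ t + P.q₂ t) + (P.q₁ t - P.q₂ t) ^ 2 = 0 := by
    simp only [Fe]; linear_combination 4 * ε ^ 2 * h2 + 4 * P.q₁ t * P.q₂ t * hε
  linarith

lemma Good.Fe_cases (h : P.Good) {F t : ℝ} (hF : P.D F * t ^ 2 + P.B F * t + P.C F = 0) :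
    F = P.Fe 1 t ∨ F = P.Fe (-1) t := by
  have h1 := P.quad_eq F t
  have h2 := h.W_sq t
  have : (F - P.Fe 1 t) * (F - P.Fe (-1) t) = 0 := by
    simp only [Fe]; linear_combination h1 + 4 * hF - 4 * h2
  rcases mul_eq_zero.1 this with h | h
  · left; linarith
  · right; linarith

lemma Good.Fe_lt (h : P.Good) (t : ℝ) : P.Fe (-1) t < P.Fe 1 t := by
  have := h.W_pos t; simp only [Fe]; linarith

lemma Good.heron' (h : P.Good) : ∃ l k m : ℝ, k ≠ 0 ∧ P.sig ^ 2 < l ∧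
    (∀ t, (P.Fe 1 t - l) * (l - P.Fe (-1) t) = 4 * (k * t + m) ^ 2) ∧
    ∀ t, P.Fe (-1) t ≤ l ∧ l ≤ P.Fe 1 t := by
  obtain ⟨l, k, m, hk, hl, H⟩ := h.heron
  have H' : ∀ t, (P.Fe 1 t - l) * (l - P.Fe (-1) t) = 4 * (k * t + m) ^ 2 := fun t => by
    have h2 := h.W_sq t
    rw [← H t]; simp only [Fe]; linear_combination 4 * h2
  refine ⟨l, k, m, hk, hl, H', fun t => ?_⟩
  have h1 := H' t
  have h2 := h.Fe_lt t
  constructor <;> by_contra! h3 <;> nlinarith [sq_nonneg (k * t + m)]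

lemma Good.D_one (h : P.Good) (t : ℝ) : P.D (P.Fe 1 t) ≠ 0 := by
  obtain ⟨l, k, m, hk, hl, -, H⟩ := h.heron'
  have := (H t).2
  simp only [D]; linarith

lemma Good.t₁_root (h : P.Good) : P.Fe (-1) P.t₁ = P.sig ^ 2 := by
  obtain ⟨l, k, m, hk, hl, -, H⟩ := h.heron'
  rcases h.Fe_cases (P.quad_t₁ h.hB) with h1 | h1
  · have := (H P.t₁).2; linarith
  · exact h1.symm

lemma Good.D_neg_one (h : P.Good) {t : ℝ} (ht : t ≠ P.t₁) : P.D (P.Fe (-1) t) ≠ 0 := by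
  intro h0
  have h1 := h.Fe_root (ε := -1) (by norm_num) t
  have h2 : P.Fe (-1) t = P.sig ^ 2 := by simp only [D] at h0; linarith
  rw [h0, h2] at h1
  apply ht
  rw [t₁, eq_div_iff h.hB]; linarith

/-- The involutions stay on the sheet `w > 0`. -/
lemma Good.Fe_inv (h : P.Good) {ε : ℝ} (hε : ε = 1 ∨ ε = -1) {t : ℝ} (hD : P.D (P.Fe ε t) ≠ 0) :
    P.Fe ε (P.inv ε t) = P.Fe ε t := by
  have hr := P.quad_kap hD (h.Fe_root (by rcases hε with rfl | rfl <;> norm_num) t)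
  obtain ⟨l, k, m, hk, hl, H1, H2⟩ := h.heron'
  have key : ∀ t t', P.Fe 1 t = P.Fe (-1) t' → False := by
    intro t t' he
    have e1 : P.Fe 1 t = l := le_antisymm (he ▸ (H2 t').1) (H2 t).2
    have z1 := H1 t
    have z2 := H1 t'
    rw [e1] at z1 he
    rw [← he] at z2
    have z1' : k * t + m = 0 := by
      have : (k * t + m) ^ 2 = 0 := by linarith
      exact pow_eq_zero_iff (two_ne_zero) |>.1 this
    have z2' : k * t' + m = 0 := by
      have : (k * t' + m) ^ 2 = 0 := by linarith
      exact pow_eq_zero_iff (two_ne_zero) |>.1 this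
    have : t = t' := mul_left_cancel₀ hk (by linarith)
    have := h.Fe_lt t
    subst t'
    linarith
  rcases h.Fe_cases hr with h1 | h1 <;> rcases hε with rfl | rfl
  · exact h1.symm
  · exact (key _ _ h1.symm).elim
  · exact (key _ _ h1).elim
  · exact h1.symm

lemma Good.step_eq (h : P.Good) {ε : ℝ} (hε : ε = 1 ∨ ε = -1) {t : ℝ} (hD : P.D (P.Fe ε t) ≠ 0) :
    P.step ε (t, P.W t) = (P.inv ε t, P.W (P.inv ε t)) := by
  have h1 := h.Fe_inv hε hD
  have e : P.q₁ t + P.q₂ t + 2 * ε * P.W t = P.Fe ε t := rfl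
  have hi : P.kap (P.Fe ε t) t = P.inv ε t := rfl
  simp only [step, e, hi, Prod.mk.injEq, true_and]
  rw [← h1]
  rcases hε with rfl | rfl <;> simp only [Fe] <;> ring

lemma Good.orb_zero (h : P.Good) : P.orb 0 = (P.t₁, P.W P.t₁) := by
  have := h.t₁_root
  simp only [Fe] at this
  simp only [orb, Prod.mk.injEq, true_and]
  linarith

lemma hasDerivAt_q₁ (P : Par ℝ) (t : ℝ) : HasDerivAt P.q₁ (2 * t - 2 * P.s₁) t := by
  have := (((hasDerivAt_id' t).pow 2).sub ((hasDerivAt_id' t).const_mul (2 * P.s₁))).add_const P.n₁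
  exact this.congr_deriv (by ring)
lemma hasDerivAt_q₂ (P : Par ℝ) (t : ℝ) : HasDerivAt P.q₂ (2 * t - 2 * P.s₂) t := by
  have := (((hasDerivAt_id' t).pow 2).sub ((hasDerivAt_id' t).const_mul (2 * P.s₂))).add_const P.n₂
  exact this.congr_deriv (by ring)

lemma continuous_q₁ (P : Par ℝ) : Continuous P.q₁ := by unfold q₁; fun_prop
lemma continuous_q₂ (P : Par ℝ) : Continuous P.q₂ := by unfold q₂; fun_prop
lemma continuous_W (P : Par ℝ) : Continuous P.W :=
  Real.continuous_sqrt.comp (P.continuous_q₁.mul P.continuous_q₂)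
lemma continuous_Fe (P : Par ℝ) (ε : ℝ) : Continuous (P.Fe ε) := by
  have := P.continuous_q₁
  have := P.continuous_q₂
  have := P.continuous_W
  unfold Fe; fun_prop

lemma Good.hasDerivAt_Fe (h : P.Good) {ε : ℝ} (hε : ε ^ 2 = 1) (t : ℝ) :
    HasDerivAt (P.Fe ε) (-ε * (2 * P.D (P.Fe ε t) * t + P.B (P.Fe ε t)) / P.W t) t := by
  have hW : HasDerivAt P.W _ t :=
    ((P.hasDerivAt_q₁ t).mul (P.hasDerivAt_q₂ t)).sqrt (mul_pos (h.q₁_pos t) (h.q₂_pos t)).ne'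
  have := ((P.hasDerivAt_q₁ t).add (P.hasDerivAt_q₂ t)).add (hW.const_mul (2 * ε))
  refine this.congr_deriv ?_
  have h0 := (h.W_pos t).ne'
  have hs := h.W_sq t
  have e : √((P.q₁ * P.q₂) t) = P.W t := rfl
  rw [e]
  field_simp
  simp only [Fe, D, B, sig, nu]
  simp only [q₁, q₂] at hs ⊢
  linear_combination (-2 * (P.W t) * (-P.s₁ - P.s₂ + 2 * t)) * hε

/-- The invariant differential `dt / w` is reversed by each involution. -/
lemma Good.hasDerivAt_inv (h : P.Good) {ε : ℝ} (hε : ε = 1 ∨ ε = -1) {t : ℝ}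
    (hD : P.D (P.Fe ε t) ≠ 0) :
    HasDerivAt (P.inv ε) (-(P.W (P.inv ε t) / P.W t)) t := by
  have hε2 : ε ^ 2 = 1 := by rcases hε with rfl | rfl <;> norm_num
  have hF := h.hasDerivAt_Fe hε2 t
  have hB : HasDerivAt (fun t => P.B (P.Fe ε t)) _ t :=
    (hF.const_mul (P.s₁ + P.s₂)).sub_const (P.sig * P.nu)
  have hDd : HasDerivAt (fun t => P.D (P.Fe ε t)) _ t := hF.const_sub (P.sig ^ 2)
  have hK : HasDerivAt (P.inv ε) _ t := (hB.neg.div hDd hD).sub (hasDerivAt_id t)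
  refine hK.congr_deriv ?_
  have hW := (h.W_pos t).ne'
  have e1 : P.B (P.Fe ε t) = - P.D (P.Fe ε t) * (P.inv ε t + t) := by
    simp only [inv, kap]; field_simp; ring
  have e2 : P.Fe ε (P.inv ε t) = P.Fe ε t := h.Fe_inv hε hD
  have e3 : (t - P.inv ε t) * (t + P.inv ε t - P.s₁ - P.s₂) =
      - ε * (P.W t - P.W (P.inv ε t)) := by
    simp only [Fe, q₁, q₂] at e2
    linear_combination -(1/2) * e2
  set u := P.inv ε t
  simp only [Pi.neg_apply]
  rw [e1]
  field_simp
  linear_combination (-ε) * e3 + (P.W t - P.W u) * hε2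

/-! ### The uniformizing integral -/

/-- The integral of the invariant differential `dt / w` from `-∞`. -/
def T (P : Par ℝ) (t : ℝ) : ℝ := ∫ x in Iic t, (P.W x)⁻¹

/-- The period. -/
def Om (P : Par ℝ) : ℝ := ∫ x, (P.W x)⁻¹

lemma inv_quad_le {s n η t : ℝ} (hη : 0 < η)
    (h : η * (1 + (t - s) ^ 2) ≤ t ^ 2 - 2 * s * t + n) :
    (t ^ 2 - 2 * s * t + n)⁻¹ ≤ η⁻¹ * (1 + (t - s) ^ 2)⁻¹ := by
  rw [← mul_inv]
  exact inv_anti₀ (by positivity) h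

lemma integrable_shift (s : ℝ) : MeasureTheory.Integrable (fun t : ℝ => (1 + (t - s) ^ 2)⁻¹) :=
  integrable_inv_one_add_sq.comp_sub_right s

/-- AM–GM for `q₁⁻¹` and `q₂⁻¹`, since `W ^ 2 = q₁ * q₂`. -/
lemma inv_W_le (h : P.Good) (t : ℝ) : (P.W t)⁻¹ ≤ ((P.q₁ t)⁻¹ + (P.q₂ t)⁻¹) / 2 := by
  have h1 := h.q₁_pos t
  have h2 := h.q₂_pos t
  have hW := h.W_pos t
  have hs := h.W_sq t
  have e : ((P.q₁ t)⁻¹ + (P.q₂ t)⁻¹) / 2 = (P.q₁ t + P.q₂ t) / (2 * P.W t ^ 2) := by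
    rw [hs]; field_simp; ring
  rw [e, inv_eq_one_div, div_le_div_iff₀ hW (by positivity)]
  have : 2 * P.W t ≤ P.q₁ t + P.q₂ t := by
    nlinarith [sq_nonneg (P.q₁ t - P.q₂ t)]
  nlinarith

lemma exists_eta {s n : ℝ} (h : s ^ 2 < n) : ∃ η : ℝ, 0 < η ∧
    ∀ t, η * (1 + (t - s) ^ 2) ≤ t ^ 2 - 2 * s * t + n := by
  refine ⟨min 1 (n - s ^ 2), lt_min one_pos (by linarith), fun t => ?_⟩
  have h1 := min_le_left 1 (n - s ^ 2)
  have h2 := min_le_right 1 (n - s ^ 2)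
  nlinarith [sq_nonneg (t - s)]

lemma Good.integrable (h : P.Good) : MeasureTheory.Integrable (fun t => (P.W t)⁻¹) := by
  obtain ⟨η₁, h1, H1⟩ := exists_eta h.h₁
  obtain ⟨η₂, h2, H2⟩ := exists_eta h.h₂
  refine ((((integrable_shift P.s₁).const_mul η₁⁻¹).add
    ((integrable_shift P.s₂).const_mul η₂⁻¹)).div_const 2).mono'
    (P.continuous_W.inv₀ fun t => (h.W_pos t).ne').aestronglyMeasurable (.of_forall fun t => ?_)
  rw [Real.norm_of_nonneg (inv_nonneg.2 (h.W_pos t).le)]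
  refine (inv_W_le h t).trans ?_
  have e1 := inv_quad_le h1 (H1 t)
  have e2 := inv_quad_le h2 (H2 t)
  simp only [q₁, q₂, Pi.add_apply]
  linarith

lemma Good.hasDerivAt_T (h : P.Good) (t : ℝ) : HasDerivAt P.T (P.W t)⁻¹ t := by
  have hc : Continuous fun t => (P.W t)⁻¹ := P.continuous_W.inv₀ fun t => (h.W_pos t).ne'
  have h1 : HasDerivAt (fun u => ∫ x in (0:ℝ)..u, (P.W x)⁻¹) (P.W t)⁻¹ t :=
    intervalIntegral.integral_hasDerivAt_right (hc.intervalIntegrable _ _)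
      hc.stronglyMeasurable.stronglyMeasurableAtFilter hc.continuousAt
  have e : P.T = fun u => (∫ x in (0:ℝ)..u, (P.W x)⁻¹) + P.T 0 := by
    ext u
    rw [← intervalIntegral.integral_Iic_sub_Iic h.integrable.integrableOn h.integrable.integrableOn]
    simp [T]
  rw [e]
  exact h1.add_const _

lemma Good.strictMono_T (h : P.Good) : StrictMono P.T :=
  strictMono_of_hasDerivAt_pos h.hasDerivAt_T fun t => inv_pos.2 (h.W_pos t)

lemma T_bot (P : Par ℝ) : Tendsto P.T atBot (𝓝 0) :=
  MeasureTheory.tendsto_integral_Iic_zero tendsto_id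

lemma Good.Om_sub (h : P.Good) (t : ℝ) : P.Om - P.T t = ∫ x in Ioi t, (P.W x)⁻¹ := by
  have := MeasureTheory.integral_add_compl (measurableSet_Iic (a := t)) h.integrable
  rw [compl_Iic] at this
  simp only [Om, T]; linarith

lemma Good.T_top (h : P.Good) : Tendsto P.T atTop (𝓝 P.Om) := by
  have : Tendsto (fun t => P.Om - P.T t) atTop (𝓝 0) := by
    simp only [h.Om_sub]
    exact MeasureTheory.tendsto_integral_Ioi_zero tendsto_id
  simpa using this.const_sub P.Om

lemma Good.T_pos (h : P.Good) (t : ℝ) : 0 < P.T t :=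
  lt_of_le_of_lt (h.strictMono_T.monotone.le_of_tendsto P.T_bot (t - 1))
    (h.strictMono_T (by linarith))

lemma Good.T_lt (h : P.Good) (t : ℝ) : P.T t < P.Om :=
  lt_of_lt_of_le (h.strictMono_T (by linarith : t < t + 1))
    (h.strictMono_T.monotone.ge_of_tendsto h.T_top (t + 1))

lemma Good.hasDerivAt_T_inv (h : P.Good) {ε : ℝ} (hε : ε = 1 ∨ ε = -1) {t : ℝ}
    (hD : P.D (P.Fe ε t) ≠ 0) :
    HasDerivAt (fun t => P.T (P.inv ε t) + P.T t) 0 t := by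
  have := ((h.hasDerivAt_T _).comp t (h.hasDerivAt_inv hε hD)).add (h.hasDerivAt_T t)
  refine this.congr_deriv ?_
  have h1 := (h.W_pos t).ne'
  have h2 := (h.W_pos (P.inv ε t)).ne'
  field_simp
  ring

/-- The involution reverses the invariant differential `dt / W`, so `T ∘ inv + T` is constant on
every interval where the involution is regular. -/
lemma Good.exists_const (h : P.Good) {ε : ℝ} (hε : ε = 1 ∨ ε = -1) {s : Set ℝ} (ho : IsOpen s)
    (hs : IsPreconnected s) (hD : ∀ t ∈ s, P.D (P.Fe ε t) ≠ 0) :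
    ∃ K, ∀ t ∈ s, P.T (P.inv ε t) = K - P.T t := by
  obtain ⟨K, hK⟩ := ho.exists_is_const_of_deriv_eq_zero hs
    (fun t ht => (h.hasDerivAt_T_inv hε (hD t ht)).differentiableAt.differentiableWithinAt)
    (fun t ht => (h.hasDerivAt_T_inv hε (hD t ht)).deriv)
  exact ⟨K, fun t ht => by linarith [hK t ht]⟩

/-- In the coordinate `T`, the involution for `ε = 1` is a reflection. -/
lemma Good.T_ell (h : P.Good) (t : ℝ) : P.T (P.inv 1 t) = P.Om - P.T t := by
  obtain ⟨K, hK⟩ := h.exists_const (.inl rfl) isOpen_univ isPreconnected_univ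
    (fun t _ => h.D_one t)
  have h1 : 0 ≤ K - P.Om := ge_of_tendsto' (h.T_top.const_sub K) fun t => by
    rw [← hK t trivial]; exact (h.T_pos _).le
  have h2 : K - 0 ≤ P.Om := le_of_tendsto' (P.T_bot.const_sub K) fun t => by
    rw [← hK t trivial]; exact (h.T_lt _).le
  rw [hK t trivial]; linarith

/-- Near `t₁` the hyperbolic involution escapes to infinity. -/
lemma Good.tendsto_hyp (h : P.Good) : Tendsto (P.inv (-1)) (𝓝[≠] P.t₁) (Bornology.cobounded ℝ) := by
  have hB0 := h.hB
  rw [← h.t₁_root] at hB0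
  have hF := (P.continuous_Fe (-1)).continuousAt (x := P.t₁)
  have cD : ContinuousAt (fun t => P.D (P.Fe (-1) t)) P.t₁ := by unfold D; fun_prop
  have cB : ContinuousAt (fun t => P.B (P.Fe (-1) t)) P.t₁ := by unfold B; fun_prop
  have D0 : P.D (P.Fe (-1) P.t₁) = 0 := by rw [h.t₁_root]; simp [D]
  have cE : ContinuousAt (fun t => -P.B (P.Fe (-1) t) - t * P.D (P.Fe (-1) t)) P.t₁ := by fun_prop
  have cQ : ContinuousAt
      (fun t => P.D (P.Fe (-1) t) / (-P.B (P.Fe (-1) t) - t * P.D (P.Fe (-1) t))) P.t₁ :=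
    cD.div cE (by simpa [D0] using hB0)
  have ne : ∀ᶠ t in 𝓝 P.t₁, -P.B (P.Fe (-1) t) - t * P.D (P.Fe (-1) t) ≠ 0 :=
    cE.eventually_ne (by simpa [D0] using hB0)
  have hne : ∀ᶠ t in 𝓝[≠] P.t₁, P.D (P.Fe (-1) t) ≠ 0 :=
    eventually_nhdsWithin_of_forall fun t ht => h.D_neg_one ht
  have lim : Tendsto (fun t => P.D (P.Fe (-1) t) / (-P.B (P.Fe (-1) t) - t * P.D (P.Fe (-1) t)))
      (𝓝[≠] P.t₁) (𝓝[≠] 0) := by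
    refine tendsto_nhdsWithin_iff.2 ⟨?_, ?_⟩
    · have := cQ.tendsto
      simp only [D0, zero_div] at this
      exact this.mono_left nhdsWithin_le_nhds
    · filter_upwards [nhdsWithin_le_nhds ne, hne] with t h1 h2
      exact div_ne_zero h2 h1
  refine (tendsto_inv₀_nhdsNE_zero.comp lim).congr' ?_
  filter_upwards [hne] with t ht
  simp only [Function.comp, inv, kap, inv_div]
  field_simp

lemma Good.hyp_const (h : P.Good) {K : ℝ} {s : Set ℝ} (hs : s ⊆ {P.t₁}ᶜ) [(𝓝[s] P.t₁).NeBot]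
    (hK : ∀ t ∈ s, P.T (P.inv (-1) t) = K - P.T t) :
    K = P.T P.t₁ ∨ K = P.T P.t₁ + P.Om := by
  have hV : Tendsto (fun t => P.T t * (P.Om - P.T t)) (Bornology.cobounded ℝ) (𝓝 0) := by
    rw [IsOrderBornology.cobounded_eq]
    refine Tendsto.sup ?_ ?_
    · simpa using P.T_bot.mul (P.T_bot.const_sub P.Om)
    · simpa using h.T_top.mul (h.T_top.const_sub P.Om)
  have l1 := (hV.comp h.tendsto_hyp).mono_left (nhdsWithin_mono P.t₁ hs)
  have cT : Continuous P.T :=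
    continuous_iff_continuousAt.2 fun t => (h.hasDerivAt_T t).continuousAt
  have l2 : Tendsto (fun t => (K - P.T t) * (P.Om - (K - P.T t))) (𝓝[s] P.t₁)
      (𝓝 ((K - P.T P.t₁) * (P.Om - (K - P.T P.t₁)))) := by
    have : Continuous (fun t => (K - P.T t) * (P.Om - (K - P.T t))) := by fun_prop
    exact this.continuousAt.tendsto.mono_left nhdsWithin_le_nhds
  have l3 := l1.congr' (f₂ := fun t => (K - P.T t) * (P.Om - (K - P.T t))) (by
    filter_upwards [self_mem_nhdsWithin] with t ht
    simp [hK t ht])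
  have := tendsto_nhds_unique l2 l3
  rcases mul_eq_zero.1 this with h | h
  · left; linarith
  · right; linarith

/-- In the coordinate `T` modulo `Om`, the involution for `ε = -1` is a reflection as well; its
pole `t₁` splits the line into two intervals, which accounts for the integer `m`. -/
lemma Good.T_hyp (h : P.Good) {t : ℝ} (ht : t ≠ P.t₁) :
    ∃ m : ℤ, P.T (P.inv (-1) t) = P.T P.t₁ - P.T t + m * P.Om := by
  rcases lt_or_gt_of_ne ht with h1 | h1
  · obtain ⟨K, hK⟩ := h.exists_const (.inr rfl) isOpen_Iio isPreconnected_Iio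
      (fun t (ht : t < P.t₁) => h.D_neg_one ht.ne)
    rcases h.hyp_const (s := Iio P.t₁) (fun t (ht : t < P.t₁) => ht.ne) hK with rfl | rfl
    · exact ⟨0, by rw [hK t h1]; simp⟩
    · exact ⟨1, by rw [hK t h1]; push_cast; ring⟩
  · obtain ⟨K, hK⟩ := h.exists_const (.inr rfl) isOpen_Ioi isPreconnected_Ioi
      (fun t (ht : P.t₁ < t) => h.D_neg_one ht.ne')
    rcases h.hyp_const (s := Ioi P.t₁) (fun t (ht : P.t₁ < t) => ht.ne') hK with rfl | rfl
    · exact ⟨0, by rw [hK t h1]; simp⟩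
    · exact ⟨1, by rw [hK t h1]; push_cast; ring⟩

/-! ### Orbits on one line -/

/-- `t₁` is `N`-torsion in the circle `ℝ / Om ℤ`. -/
def Tors (P : Par ℝ) (N : ℕ) : Prop := ∃ m : ℤ, N * P.T P.t₁ + m * P.Om = 0

/-- If the rotation has infinite order, its orbits are dense. -/
lemma Good.dense_of_not_tors (h : P.Good) (hN : ∀ N : ℕ, 1 ≤ N → ¬ P.Tors N) {X : Set ℝ}
    (h₁ : P.t₁ ∈ X) (he : ∀ t ∈ X, P.inv 1 t ∈ X) (hh : ∀ t ∈ X, t ≠ P.t₁ → P.inv (-1) t ∈ X) :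
    Dense X := by
  have hOm : 0 < P.Om := (h.T_pos 0).trans (h.T_lt 0)
  have nt : ∀ n m : ℤ, n ≠ 0 → n * P.T P.t₁ + m * P.Om ≠ 0 := by
    intro n m hn h0
    obtain ⟨k, rfl | rfl⟩ := n.eq_nat_or_neg
    · exact hN k (by omega) ⟨m, by exact_mod_cast h0⟩
    · exact hN k (by omega) ⟨-m, by push_cast at h0 ⊢; linarith⟩
  have orb1 : ∀ n : ℕ, ∃ t ∈ X, ∃ m : ℤ, P.T t = (n + 1 : ℤ) * P.T P.t₁ + m * P.Om := by
    intro n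
    induction n with
    | zero => exact ⟨_, h₁, 0, by simp⟩
    | succ n ih =>
      obtain ⟨t, ht, m, hm⟩ := ih
      have e1 := h.T_ell t
      have hne : P.inv 1 t ≠ P.t₁ := by
        intro e
        rw [e, hm] at e1
        refine nt (n + 2) (m - 1) (by positivity) ?_
        push_cast at e1 ⊢; linarith
      obtain ⟨m', hm'⟩ := h.T_hyp hne
      refine ⟨_, hh _ (he _ ht) hne, m + m' - 1, ?_⟩
      rw [hm', e1, hm]; push_cast; ring
  have orb2 : ∀ n : ℤ, n ≠ 0 → ∃ t ∈ X, ∃ m : ℤ, P.T t = n * P.T P.t₁ + m * P.Om := by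
    intro n hn
    have hp : 1 ≤ n.natAbs := Int.natAbs_pos.2 hn
    obtain ⟨k, hk⟩ : ∃ k : ℕ, n.natAbs = k + 1 := ⟨n.natAbs - 1, by omega⟩
    obtain ⟨t, ht, m, hm⟩ := orb1 k
    rcases Int.natAbs_eq n with e | e
    · exact ⟨t, ht, m, by rw [hm, e, hk]; push_cast; ring⟩
    · refine ⟨_, he t ht, 1 - m, ?_⟩
      rw [h.T_ell, hm, e, hk]; push_cast; ring
  -- A rotation of infinite order generates, with the period, a dense subgroup of `ℝ`.
  have hd : Dense (AddSubgroup.closure {P.T P.t₁, P.Om} : Set ℝ) := by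
    rcases AddSubgroup.dense_or_cyclic (AddSubgroup.closure {P.T P.t₁, P.Om}) with hd | ⟨g, hg⟩
    · exact hd
    exfalso
    have m1 : P.T P.t₁ ∈ AddSubgroup.closure {g} :=
      hg ▸ AddSubgroup.subset_closure (by simp)
    have m2 : P.Om ∈ AddSubgroup.closure {g} :=
      hg ▸ AddSubgroup.subset_closure (by simp)
    obtain ⟨i, hi⟩ := AddSubgroup.mem_closure_singleton.1 m1
    obtain ⟨j, hj⟩ := AddSubgroup.mem_closure_singleton.1 m2
    simp only [zsmul_eq_mul] at hi hj
    refine nt j (-i) ?_ ?_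
    · rintro rfl; simp at hj; linarith
    · rw [← hi, ← hj]; push_cast; ring
  refine dense_iff_inter_open.2 fun U hU ⟨u, hu⟩ => ?_
  obtain ⟨r, hr, hb⟩ := Metric.isOpen_iff.1 hU u hu
  obtain ⟨z, hz, hz'⟩ := hd.exists_between (h.strictMono_T (by linarith : u - r < u + r))
  obtain ⟨n, m, hnm⟩ := AddSubgroup.mem_closure_pair.1 hz
  simp only [zsmul_eq_mul] at hnm
  have z0 : 0 < z := (h.T_pos _).trans hz'.1
  have z1 : z < P.Om := hz'.2.trans (h.T_lt _)
  have noint : ∀ m : ℤ, 0 < m * P.Om → m * P.Om < P.Om → False := by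
    intro m hm1 hm2
    have a1 : (0:ℝ) < m := pos_of_mul_pos_left hm1 hOm.le
    have a2 : (m:ℝ) < 1 := by nlinarith
    norm_cast at a1 a2
    omega
  have hn : n ≠ 0 := by
    rintro rfl
    refine noint m ?_ ?_ <;> simp at hnm <;> linarith
  obtain ⟨t, ht, m', hm'⟩ := orb2 n hn
  have hmm : m' = m := by
    have b1 := h.T_pos t
    have b2 := h.T_lt t
    have c1 : ((m' - m : ℤ) : ℝ) * P.Om < 1 * P.Om := by push_cast; linarith
    have c2 : (-1 : ℝ) * P.Om < ((m' - m : ℤ) : ℝ) * P.Om := by push_cast; linarith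
    have c1' := lt_of_mul_lt_mul_right c1 hOm.le
    have c2' := lt_of_mul_lt_mul_right c2 hOm.le
    norm_cast at c1' c2'
    omega
  have hTt : P.T t = z := by rw [hm', hmm, hnm]
  refine ⟨t, hb ?_, ht⟩
  rw [← hTt] at hz'
  have d1 := h.strictMono_T.lt_iff_lt.1 hz'.1
  have d2 := h.strictMono_T.lt_iff_lt.1 hz'.2
  rw [Metric.mem_ball, Real.dist_eq, abs_lt]
  constructor <;> linarith

/-- Before torsion occurs, the formal orbit is the actual one. -/
lemma Good.orb_eq (h : P.Good) (n : ℕ) (hN : ∀ k : ℕ, 1 ≤ k → k ≤ n + 1 → ¬ P.Tors k) :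
    ∃ t, P.orb n = (t, P.W t) ∧ ∃ m : ℤ, P.T t = (n + 1) * P.T P.t₁ + m * P.Om := by
  induction n with
  | zero => exact ⟨_, h.orb_zero, 0, by simp⟩
  | succ n ih =>
    obtain ⟨t, ht, m, hm⟩ := ih fun k h1 h2 => hN k h1 (by omega)
    have e1 := h.T_ell t
    have hne : P.inv 1 t ≠ P.t₁ := by
      intro e
      rw [e, hm] at e1
      refine hN (n + 2) (by omega) le_rfl ⟨m - 1, ?_⟩
      push_cast at e1 ⊢; linarith
    obtain ⟨m', hm'⟩ := h.T_hyp hne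
    refine ⟨P.inv (-1) (P.inv 1 t), ?_, m + m' - 1, ?_⟩
    · rw [orb, ht, h.step_eq (.inl rfl) (h.D_one t), h.step_eq (.inr rfl) (h.D_neg_one hne)]
    · rw [hm', e1, hm]; push_cast; ring

/-- The algebraic form of torsion. -/
lemma Good.exists_alg (h : P.Good) (hN : ∃ N : ℕ, 1 ≤ N ∧ P.Tors N) :
    ∃ n, (P.step 1 (P.orb n)).1 = P.t₁ := by
  classical
  obtain ⟨⟨h1, m₀, hm₀⟩, hmin⟩ := And.intro (Nat.find_spec hN) (fun k => Nat.find_min hN (m := k))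
  set N := Nat.find hN
  have hT := h.T_pos P.t₁
  have hT' := h.T_lt P.t₁
  have hOm : 0 < P.Om := hT.trans hT'
  have noint : ∀ (z : ℝ) (m : ℤ), -P.Om < z → z < P.Om → z = m * P.Om → m = 0 := by
    intro z m h1 h2 h3
    have c1 : (m : ℝ) * P.Om < 1 * P.Om := by linarith
    have c2 : (-1 : ℝ) * P.Om < m * P.Om := by linarith
    have c1' := lt_of_mul_lt_mul_right c1 hOm.le
    have c2' := lt_of_mul_lt_mul_right c2 hOm.le
    norm_cast at c1' c2'
    omega
  have hN2 : 2 ≤ N := by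
    by_contra! hlt
    have : N = 1 := by omega
    rw [this] at hm₀
    have := noint (P.T P.t₁) (-m₀) (by linarith) hT' (by push_cast at hm₀ ⊢; linarith)
    have : m₀ = 0 := by omega
    simp [this] at hm₀
    linarith
  obtain ⟨n, hn⟩ : ∃ n, N = n + 2 := ⟨N - 2, by omega⟩
  obtain ⟨t, ht, m, hm⟩ := h.orb_eq n fun k hk hk' hT => hmin k (by omega) ⟨hk, hT⟩
  refine ⟨n, ?_⟩
  rw [ht, h.step_eq (.inl rfl) (h.D_one t)]
  apply h.strictMono_T.injective
  have e := h.T_ell t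
  have b1 := h.T_pos (P.inv 1 t)
  have b2 := h.T_lt (P.inv 1 t)
  have hz := noint (P.T (P.inv 1 t) - P.T P.t₁) (1 - m + m₀) (by linarith) (by linarith) (by
    rw [e, hm]; rw [hn] at hm₀; push_cast at hm₀ ⊢; linarith)
  have : P.T (P.inv 1 t) - P.T P.t₁ = ((1 - m + m₀ : ℤ) : ℝ) * P.Om := by
    rw [e, hm]; rw [hn] at hm₀; push_cast at hm₀ ⊢; linarith
  rw [hz] at this
  simp at this
  linarith

/-- Converse of `Good.exists_alg`, with a bound on the order of torsion. -/
lemma Good.tors_of_alg (h : P.Good) {n : ℕ} (hn : (P.step 1 (P.orb n)).1 = P.t₁) :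
    ∃ k : ℕ, 1 ≤ k ∧ k ≤ n + 2 ∧ P.Tors k := by
  by_contra! hN
  obtain ⟨t, ht, m, hm⟩ := h.orb_eq n fun k hk hk' => hN k hk (by omega)
  rw [ht, h.step_eq (.inl rfl) (h.D_one t)] at hn
  have e := h.T_ell t
  simp only at hn
  rw [hn, hm] at e
  refine hN (n + 2) (by omega) le_rfl ⟨m - 1, ?_⟩
  push_cast; linarith

lemma Good.not_tors (h : P.Good) {N k : ℕ} (hk : 1 ≤ k) (hkN : k ≤ N)
    (hT : N * P.T P.t₁ < P.Om ∨ N * (P.Om - P.T P.t₁) < P.Om) : ¬ P.Tors k := by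
  rintro ⟨m, hm⟩
  have h1 := h.T_pos P.t₁
  have h2 := h.T_lt P.t₁
  have hOm : 0 < P.Om := h1.trans h2
  have k1 : (1:ℝ) ≤ k := by exact_mod_cast hk
  have k2 : (k:ℝ) ≤ N := by exact_mod_cast hkN
  have noint : ∀ (z : ℝ) (m : ℤ), 0 < z → z < P.Om → z ≠ m * P.Om := by
    intro z m h1 h2 h3
    have a1 : (0:ℝ) < m := pos_of_mul_pos_left (h3 ▸ h1) hOm.le
    have a2 : (m:ℝ) < 1 := by nlinarith
    norm_cast at a1 a2
    omega
  rcases hT with hT | hT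
  · exact noint (k * P.T P.t₁) (-m) (by nlinarith) (by nlinarith) (by push_cast; linarith)
  · exact noint (k * (P.Om - P.T P.t₁)) (k + m) (by nlinarith) (by nlinarith)
      (by push_cast; linarith)

/-! ### Degeneration to a line through the first point -/

/-- Away from `s₁`, the integral of `1 / W` stays bounded on a degenerating family of lines. -/
lemma Good.setIntegral_le (h : P.Good) {η κ : ℝ} (hη : 0 < η) (hκ : 0 < κ)
    (hq₂ : ∀ t, κ * (1 + (t - P.s₂) ^ 2) ≤ P.q₂ t) {A : Set ℝ} (hA : MeasurableSet A)
    (hd : ∀ t ∈ A, η ≤ |t - P.s₁|) :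
    ∫ x in A, (P.W x)⁻¹ ≤ ((η ^ 2 / (1 + η ^ 2))⁻¹ * Real.pi + κ⁻¹ * Real.pi) / 2 := by
  set θ := η ^ 2 / (1 + η ^ 2) with hθ
  have hθ0 : 0 < θ := by positivity
  have i1 := (integrable_shift P.s₁).const_mul θ⁻¹
  have i2 := (integrable_shift P.s₂).const_mul κ⁻¹
  have i3 := (i1.add i2).div_const 2
  calc ∫ x in A, (P.W x)⁻¹
      ≤ ∫ x in A, (θ⁻¹ * (1 + (x - P.s₁) ^ 2)⁻¹ + κ⁻¹ * (1 + (x - P.s₂) ^ 2)⁻¹) / 2 := by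
        refine MeasureTheory.setIntegral_mono_on h.integrable.integrableOn i3.integrableOn hA
          fun t ht => (inv_W_le h t).trans ?_
        have hsq : η ^ 2 ≤ (t - P.s₁) ^ 2 := by
          rw [← sq_abs (t - P.s₁)]; exact pow_le_pow_left₀ hη.le (hd t ht) 2
        have e1 : (P.q₁ t)⁻¹ ≤ θ⁻¹ * (1 + (t - P.s₁) ^ 2)⁻¹ := by
          refine inv_quad_le hθ0 ?_
          have : θ * (1 + (t - P.s₁) ^ 2) ≤ (t - P.s₁) ^ 2 := by
            rw [hθ, div_mul_eq_mul_div, div_le_iff₀ (by positivity)]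
            nlinarith
          nlinarith [h.h₁]
        have e2 : (P.q₂ t)⁻¹ ≤ κ⁻¹ * (1 + (t - P.s₂) ^ 2)⁻¹ := inv_quad_le hκ (hq₂ t)
        linarith
    _ ≤ ∫ x, (θ⁻¹ * (1 + (x - P.s₁) ^ 2)⁻¹ + κ⁻¹ * (1 + (x - P.s₂) ^ 2)⁻¹) / 2 :=
        MeasureTheory.setIntegral_le_integral i3 (.of_forall fun t => by positivity)
    _ = _ := by
        rw [MeasureTheory.integral_div, MeasureTheory.integral_add i1 i2,
          MeasureTheory.integral_const_mul, MeasureTheory.integral_const_mul,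
          MeasureTheory.integral_sub_right_eq_self (fun x : ℝ => (1 + x ^ 2)⁻¹),
          MeasureTheory.integral_sub_right_eq_self (fun x : ℝ => (1 + x ^ 2)⁻¹),
          integral_univ_inv_one_add_sq]

/-- The period grows logarithmically as the line approaches the first point. -/
lemma Good.le_Om (h : P.Good) {M : ℝ} (hM : ∀ t ∈ Icc P.s₁ (P.s₁ + 1), P.q₂ t ≤ M) :
    (√M)⁻¹ * Real.log ((1 + √(P.n₁ - P.s₁ ^ 2)) / √(P.n₁ - P.s₁ ^ 2)) ≤ P.Om := by
  set r := √(P.n₁ - P.s₁ ^ 2) with hr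
  have hr0 : 0 < r := Real.sqrt_pos.2 (by linarith [h.h₁])
  have hr2 : r ^ 2 = P.n₁ - P.s₁ ^ 2 := Real.sq_sqrt (by linarith [h.h₁])
  have e : ∫ t in P.s₁..(P.s₁ + 1), (√M)⁻¹ * (t + (r - P.s₁))⁻¹ =
      (√M)⁻¹ * Real.log ((1 + r) / r) := by
    rw [intervalIntegral.integral_const_mul,
      intervalIntegral.integral_comp_add_right (fun x : ℝ => x⁻¹), integral_inv_of_pos (by linarith)
        (by linarith)]
    congr 3 <;> ring
  have hc : Continuous fun t => (P.W t)⁻¹ := P.continuous_W.inv₀ fun t => (h.W_pos t).ne'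
  rw [← e]
  calc _ ≤ ∫ t in P.s₁..(P.s₁ + 1), (P.W t)⁻¹ := by
        refine intervalIntegral.integral_mono_on (by linarith) ?_ (hc.intervalIntegrable _ _) ?_
        · refine ContinuousOn.intervalIntegrable ?_
          rw [uIcc_of_le (by linarith)]
          refine continuousOn_const.mul (ContinuousOn.inv₀ (by fun_prop) fun t ht => ?_)
          have := ht.1
          linarith
        · intro t ht
          have t1 := ht.1
          have tp : 0 < t + (r - P.s₁) := by linarith
          rw [← mul_inv]
          refine inv_anti₀ (h.W_pos t) ?_
          rw [W, mul_comm, Real.sqrt_mul (h.q₂_pos t).le]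
          refine mul_le_mul (Real.sqrt_le_sqrt (hM t ht)) ?_ (Real.sqrt_nonneg _)
            (Real.sqrt_nonneg _)
          refine Real.sqrt_le_iff.2 ⟨tp.le, ?_⟩
          simp only [q₁]
          nlinarith
    _ ≤ P.Om := by
        rw [intervalIntegral.integral_of_le (by linarith)]
        exact MeasureTheory.setIntegral_le_integral h.integrable
          (.of_forall fun t => (inv_pos.2 (h.W_pos t)).le)

/-- As the line approaches the first point, the period tends to infinity, while one of the two
integrals from `t₁` to the point at infinity stays bounded. -/
lemma degenerate {ι : Type*} {l : Filter ι} {Q : ι → Par ℝ} {R : Par ℝ}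
    (hs₁ : Tendsto (fun i => (Q i).s₁) l (𝓝 R.s₁)) (hs₂ : Tendsto (fun i => (Q i).s₂) l (𝓝 R.s₂))
    (hn₁ : Tendsto (fun i => (Q i).n₁) l (𝓝 R.n₁)) (hn₂ : Tendsto (fun i => (Q i).n₂) l (𝓝 R.n₂))
    (hG : ∀ᶠ i in l, (Q i).Good) (h₁ : R.n₁ = R.s₁ ^ 2) (h₂ : R.s₂ ^ 2 < R.n₂)
    (hB : R.B (R.sig ^ 2) ≠ 0) (A : ℝ) (hA : 0 < A) :
    ∀ᶠ i in l, A * (Q i).T (Q i).t₁ < (Q i).Om ∨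
      A * ((Q i).Om - (Q i).T (Q i).t₁) < (Q i).Om := by
  have ht : Tendsto (fun i => (Q i).t₁) l (𝓝 R.t₁) := by
    refine Tendsto.div ?_ ?_ hB
    · simp only [C, sig, nu]
      exact ((((((hs₁.sub hs₂).pow 2).add (hn₁.sub hn₂)).pow 2).sub
        ((((hs₁.sub hs₂).pow 2).const_mul 4).mul hn₁)).div_const 4).neg
    · simp only [B, sig, nu]
      exact ((hs₁.add hs₂).mul ((hs₁.sub hs₂).pow 2)).sub ((hs₁.sub hs₂).mul (hn₁.sub hn₂))
  have hne : R.t₁ - R.s₁ ≠ 0 := by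
    intro h0
    have h1 : R.t₁ * R.B (R.sig ^ 2) = - R.C (R.sig ^ 2) := div_mul_cancel₀ _ hB
    rw [sub_eq_zero.1 h0] at h1
    have h3 : (R.n₂ - R.s₂ ^ 2) ^ 2 = 0 := by
      simp only [B, C, sig, nu, h₁] at h1
      linear_combination 4 * h1
    have := pow_eq_zero_iff (two_ne_zero) |>.1 h3
    linarith
  set η := |R.t₁ - R.s₁| / 2 with hη
  have hη0 : 0 < η := by have := abs_pos.2 hne; positivity
  set κ := min 1 ((R.n₂ - R.s₂ ^ 2) / 2) with hκ
  have hκ0 : 0 < κ := lt_min one_pos (by linarith)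
  set M := 2 * (1 + R.sig ^ 2) + (R.n₂ - R.s₂ ^ 2) + 1 with hM
  have hM0 : 0 < M := by nlinarith [sq_nonneg R.sig]
  set K := ((η ^ 2 / (1 + η ^ 2))⁻¹ * Real.pi + κ⁻¹ * Real.pi) / 2
  have ev1 : ∀ᶠ i in l, η < |(Q i).t₁ - (Q i).s₁| :=
    (ht.sub hs₁).abs.eventually_const_lt (by rw [hη]; linarith)
  have ev2 : ∀ᶠ i in l, (R.n₂ - R.s₂ ^ 2) / 2 < (Q i).n₂ - (Q i).s₂ ^ 2 :=
    (hn₂.sub (hs₂.pow 2)).eventually_const_lt (by linarith)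
  have ev3 : ∀ᶠ i in l, 2 * (1 + (Q i).sig ^ 2) + ((Q i).n₂ - (Q i).s₂ ^ 2) < M := by
    refine Tendsto.eventually_lt_const (v := 2 * (1 + R.sig ^ 2) + (R.n₂ - R.s₂ ^ 2))
      (by rw [hM]; linarith) ?_
    exact ((((hs₁.sub hs₂).pow 2).const_add 1).const_mul 2).add (hn₂.sub (hs₂.pow 2))
  have hr : Tendsto (fun i => √((Q i).n₁ - (Q i).s₁ ^ 2)) l (𝓝[>] 0) := by
    refine tendsto_nhdsWithin_iff.2 ⟨?_, ?_⟩
    · have := (hn₁.sub (hs₁.pow 2)).sqrt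
      simpa [h₁] using this
    · filter_upwards [hG] with i hi
      exact Real.sqrt_pos.2 (by linarith [hi.h₁])
  have hlog : Tendsto (fun i => (√M)⁻¹ * Real.log ((1 + √((Q i).n₁ - (Q i).s₁ ^ 2)) /
      √((Q i).n₁ - (Q i).s₁ ^ 2))) l atTop := by
    refine Tendsto.const_mul_atTop (inv_pos.2 (Real.sqrt_pos.2 hM0)) ?_
    refine Real.tendsto_log_atTop.comp ?_
    have h1 := (tendsto_inv_nhdsGT_zero.comp hr).atTop_add (tendsto_const_nhds (x := (1:ℝ)))
    refine h1.congr' ?_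
    filter_upwards [hG] with i hi
    have : 0 < √((Q i).n₁ - (Q i).s₁ ^ 2) := Real.sqrt_pos.2 (by linarith [hi.h₁])
    simp only [Function.comp]
    field_simp
  filter_upwards [hG, ev1, ev2, ev3, hlog.eventually_gt_atTop (A * K)] with i hi e1 e2 e3 e4
  have hOm : A * K < (Q i).Om := by
    refine e4.trans_le (hi.le_Om fun t ht => e3.le.trans' ?_)
    have a1 : (t - (Q i).s₁) ^ 2 ≤ 1 := by
      have := ht.1
      have := ht.2
      nlinarith
    simp only [q₂, sig]
    nlinarith [sq_nonneg ((t - (Q i).s₁) - ((Q i).s₁ - (Q i).s₂))]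
  have hq₂ : ∀ t, κ * (1 + (t - (Q i).s₂) ^ 2) ≤ (Q i).q₂ t := fun t => by
    have k1 : κ ≤ 1 := min_le_left _ _
    have k2 : κ ≤ (R.n₂ - R.s₂ ^ 2) / 2 := min_le_right _ _
    simp only [q₂]
    nlinarith [sq_nonneg (t - (Q i).s₂)]
  rcases lt_or_ge (Q i).t₁ (Q i).s₁ with hlt | hge
  · left
    refine lt_of_le_of_lt (mul_le_mul_of_nonneg_left ?_ hA.le) hOm
    refine hi.setIntegral_le hη0 hκ0 hq₂ measurableSet_Iic fun t ht => ?_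
    have ht' : t ≤ (Q i).t₁ := ht
    rw [abs_of_neg (by linarith)] at e1 ⊢
    linarith
  · right
    refine lt_of_le_of_lt (mul_le_mul_of_nonneg_left ?_ hA.le) hOm
    rw [hi.Om_sub]
    refine hi.setIntegral_le hη0 hκ0 hq₂ measurableSet_Ioi fun t ht => ?_
    have ht' : (Q i).t₁ < t := ht
    rw [abs_of_nonneg (by linarith)] at e1 ⊢
    linarith

end Par

/-! ### Lines in rational directions -/

/-- Two linearly independent vectors `(a₁, a₂)` and `(b₁, b₂)` of the rational plane with the norm
form `x² + d y²`. -/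
structure Cfg where
  d : ℚ
  a₁ : ℚ
  a₂ : ℚ
  b₁ : ℚ
  b₂ : ℚ
  hd : 0 < d
  hab : a₁ * b₂ - a₂ * b₁ ≠ 0

namespace Cfg

/-- Exchange of the two vectors. -/
def swap (G : Cfg) : Cfg := ⟨G.d, G.b₁, G.b₂, G.a₁, G.a₂, G.hd, fun h => G.hab (by linarith)⟩

section Field
variable {K : Type*} [Field K] (G : Cfg)

/-- First coordinate of the unit vector with parameter `x`. -/
def c₁ (x : K) : K := (x ^ 2 - (G.d : K)) / (x ^ 2 + (G.d : K))
/-- Second coordinate of the unit vector with parameter `x`. -/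
def c₂ (x : K) : K := 2 * x / (x ^ 2 + (G.d : K))

/-- Data of the line through the origin in the direction `(c₁ x, c₂ x)`. -/
def par (x : K) : Par K where
  s₁ := G.a₁ * G.c₁ x + G.d * G.a₂ * G.c₂ x
  s₂ := G.b₁ * G.c₁ x + G.d * G.b₂ * G.c₂ x
  n₁ := G.a₁ ^ 2 + G.d * G.a₂ ^ 2
  n₂ := G.b₁ ^ 2 + G.d * G.b₂ ^ 2

lemma par_map {K' : Type*} [Field K'] (φ : K →+* K') (x : K) :
    (G.par x).map φ = G.par (φ x) := by
  simp [par, Par.map, c₁, c₂, map_ofNat φ 2]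

end Field

variable (G : Cfg)

lemma d_pos : (0 : ℝ) < G.d := by exact_mod_cast G.hd

lemma den_pos (x : ℝ) : 0 < x ^ 2 + (G.d : ℝ) := by
  have := G.d_pos
  positivity

lemma c_unit (x : ℝ) : G.c₁ x ^ 2 + G.d * G.c₂ x ^ 2 = 1 := by
  have := (G.den_pos x).ne'
  simp only [c₁, c₂]
  field_simp
  ring

lemma hab_real : (G.a₁ : ℝ) * G.b₂ - G.a₂ * G.b₁ ≠ 0 := by exact_mod_cast G.hab

lemma q₁_eq (x t : ℝ) :
    (G.par x).q₁ t = (t * G.c₁ x - G.a₁) ^ 2 + G.d * (t * G.c₂ x - G.a₂) ^ 2 := by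
  have := G.c_unit x
  simp only [Par.q₁, par]
  linear_combination -t ^ 2 * this

lemma q₂_eq (x t : ℝ) :
    (G.par x).q₂ t = (t * G.c₁ x - G.b₁) ^ 2 + G.d * (t * G.c₂ x - G.b₂) ^ 2 := by
  have := G.c_unit x
  simp only [Par.q₂, par]
  linear_combination -t ^ 2 * this

lemma gram (x v₁ v₂ : ℝ) : v₁ ^ 2 + G.d * v₂ ^ 2 - (v₁ * G.c₁ x + G.d * v₂ * G.c₂ x) ^ 2 =
    G.d * (G.c₁ x * v₂ - G.c₂ x * v₁) ^ 2 := by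
  have := G.c_unit x
  linear_combination -(v₁ ^ 2 + G.d * v₂ ^ 2) * this

lemma B_eq (x : ℝ) : (G.par x).B ((G.par x).sig ^ 2) = (G.par x).sig * G.d *
    ((G.c₁ x * G.b₂ - G.c₂ x * G.b₁) ^ 2 - (G.c₁ x * G.a₂ - G.c₂ x * G.a₁) ^ 2) := by
  have h1 := G.gram x G.a₁ G.a₂
  have h2 := G.gram x G.b₁ G.b₂
  simp only [Par.B, Par.nu, Par.sig, par]
  linear_combination ((G.a₁ * G.c₁ x + G.d * G.a₂ * G.c₂ x) -
    (G.b₁ * G.c₁ x + G.d * G.b₂ * G.c₂ x)) * (h2 - h1)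

lemma heron (x t : ℝ) :
    2 * ((G.a₁ - G.b₁) ^ 2 + G.d * (G.a₂ - G.b₂) ^ 2) * ((G.par x).q₁ t + (G.par x).q₂ t)
      - ((G.a₁ - G.b₁) ^ 2 + G.d * (G.a₂ - G.b₂) ^ 2) ^ 2
      - ((G.par x).q₁ t - (G.par x).q₂ t) ^ 2 =
    4 * (√(G.d : ℝ) * ((G.c₁ x * G.a₂ - G.c₂ x * G.a₁) - (G.c₁ x * G.b₂ - G.c₂ x * G.b₁)) * t
      + √(G.d : ℝ) * (G.a₁ * G.b₂ - G.a₂ * G.b₁)) ^ 2 := by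
  have hs : √(G.d : ℝ) ^ 2 = G.d := Real.sq_sqrt G.d_pos.le
  rw [q₁_eq, q₂_eq]
  linear_combination -4 * (((G.c₁ x * G.a₂ - G.c₂ x * G.a₁) -
    (G.c₁ x * G.b₂ - G.c₂ x * G.b₁)) * t + (G.a₁ * G.b₂ - G.a₂ * G.b₁)) ^ 2 * hs

lemma quad_ne {x : ℝ} (hx : Transcendental ℚ x) {p q r : ℚ} (h : p ≠ 0 ∨ q ≠ 0) :
    (p : ℝ) * x ^ 2 + q * x + r ≠ 0 := by
  intro h0
  apply hx
  refine ⟨Polynomial.C p * Polynomial.X ^ 2 + Polynomial.C q * Polynomial.X + Polynomial.C r,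
    fun hz => ?_, by simpa using h0⟩
  have e2 := congrArg (fun f => Polynomial.coeff f 2) hz
  have e1 := congrArg (fun f => Polynomial.coeff f 1) hz
  simp [Polynomial.coeff_C] at e1 e2
  simp_all

lemma dot_ne {x : ℝ} (hx : Transcendental ℚ x) {v₁ v₂ : ℚ} (h : v₁ ≠ 0 ∨ v₂ ≠ 0) :
    v₁ * G.c₁ x + G.d * v₂ * G.c₂ x ≠ 0 := by
  have hd := (G.den_pos x).ne'
  have := quad_ne hx (p := v₁) (q := 2 * G.d * v₂) (r := -(G.d * v₁))
    (h.imp_right fun h => by have := G.hd; positivity)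
  intro h0
  apply this
  simp only [c₁, c₂] at h0
  field_simp at h0
  push_cast
  linear_combination h0

lemma det_ne {x : ℝ} (hx : Transcendental ℚ x) {v₁ v₂ : ℚ} (h : v₁ ≠ 0 ∨ v₂ ≠ 0) :
    G.c₁ x * v₂ - G.c₂ x * v₁ ≠ 0 := by
  have hd := (G.den_pos x).ne'
  have := quad_ne hx (p := v₂) (q := -2 * v₁) (r := -(G.d * v₂))
    (h.symm.imp_right fun h => by simpa using h)
  intro h0
  apply this
  simp only [c₁, c₂] at h0
  field_simp at h0
  push_cast
  linear_combination h0

lemma ne_a : G.a₁ ≠ 0 ∨ G.a₂ ≠ 0 := by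
  by_contra! h
  exact G.hab (by simp [h])

lemma ne_b : G.b₁ ≠ 0 ∨ G.b₂ ≠ 0 := G.swap.ne_a

lemma ne_sub : G.a₁ - G.b₁ ≠ 0 ∨ G.a₂ - G.b₂ ≠ 0 := by
  by_contra! h
  exact G.hab (by linear_combination G.b₂ * h.1 - G.b₁ * h.2)

lemma ne_add : G.a₁ + G.b₁ ≠ 0 ∨ G.a₂ + G.b₂ ≠ 0 := by
  by_contra! h
  exact G.hab (by linear_combination G.b₂ * h.1 - G.b₁ * h.2)

lemma sig_eq (x : ℝ) : (G.par x).sig =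
    (G.a₁ - G.b₁ : ℚ) * G.c₁ x + G.d * (G.a₂ - G.b₂ : ℚ) * G.c₂ x := by
  simp only [Par.sig, par]; push_cast; ring

lemma good {x : ℝ} (hx : Transcendental ℚ x) : (G.par x).Good := by
  have hd := G.d_pos
  have key : ∀ v₁ v₂ : ℚ, v₁ ≠ 0 ∨ v₂ ≠ 0 →
      ((v₁ : ℝ) * G.c₁ x + G.d * v₂ * G.c₂ x) ^ 2 < v₁ ^ 2 + G.d * v₂ ^ 2 := by
    intro v₁ v₂ hv
    have h1 := G.gram x v₁ v₂
    have h2 := G.det_ne hx hv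
    have : 0 < (G.d : ℝ) * (G.c₁ x * v₂ - G.c₂ x * v₁) ^ 2 := by positivity
    linarith
  have h3 := G.det_ne hx G.ne_sub
  have h4 := G.det_ne hx G.ne_add
  push_cast at h3 h4
  refine ⟨key _ _ G.ne_a, key _ _ G.ne_b, ?_, _, _, _, ?_, ?_, G.heron x⟩
  · have h1 := G.dot_ne hx G.ne_sub
    rw [← G.sig_eq] at h1
    rw [B_eq]
    refine mul_ne_zero (mul_ne_zero h1 hd.ne') ?_
    have h5 := neg_ne_zero.2 (mul_ne_zero h3 h4)
    contrapose! h5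
    linear_combination h5
  · have : √(G.d : ℝ) ≠ 0 := (Real.sqrt_pos.2 hd).ne'
    refine mul_ne_zero this ?_
    contrapose! h3
    linear_combination h3
  · have := key _ _ G.ne_sub
    rw [← G.sig_eq] at this
    push_cast at this
    exact this

/-- Whether the orbit of `t₁` closes up after a given number of steps does not depend on the
transcendental parameter: it is an identity between rational functions. -/
lemma alg_transfer {x y : ℝ} (hx : Transcendental ℚ x) (hy : Transcendental ℚ y) {n : ℕ}
    (h : ((G.par x).step 1 ((G.par x).orb n)).1 = (G.par x).t₁) :
    ((G.par y).step 1 ((G.par y).orb n)).1 = (G.par y).t₁ := by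
  have key : ∀ z : ℝ, Transcendental ℚ z → ∃ φ : RatFunc ℚ →+* ℝ, φ RatFunc.X = z := by
    intro z hz
    have hi : Function.Injective ((Polynomial.aeval z : Polynomial ℚ →ₐ[ℚ] ℝ) :
        Polynomial ℚ →+* ℝ) := transcendental_iff_injective.1 hz
    refine ⟨IsFractionRing.lift hi, ?_⟩
    rw [← RatFunc.algebraMap_X, IsFractionRing.lift_algebraMap]
    simp
  obtain ⟨φ, hφ⟩ := key x hx
  obtain ⟨ψ, hψ⟩ := key y hy
  have tr : ∀ (χ : RatFunc ℚ →+* ℝ), ((G.par (χ RatFunc.X)).step 1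
      ((G.par (χ RatFunc.X)).orb n)).1 = (G.par (χ RatFunc.X)).t₁ ↔
      ((G.par (RatFunc.X : RatFunc ℚ)).step 1 ((G.par RatFunc.X).orb n)).1
        = (G.par RatFunc.X).t₁ := by
    intro χ
    have h1 := (G.par (RatFunc.X : RatFunc ℚ)).map_step χ 1 ((G.par RatFunc.X).orb n)
    rw [← G.par_map, Par.map_orb, Par.map_t₁]
    rw [map_one] at h1
    rw [h1]
    exact χ.injective.eq_iff
  rw [← hψ, tr ψ, ← tr φ, hφ]
  exact h

lemma continuous_c₁ : Continuous (G.c₁ : ℝ → ℝ) := by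
  unfold c₁
  exact Continuous.div (by fun_prop) (by fun_prop) fun x => (G.den_pos x).ne'

lemma continuous_c₂ : Continuous (G.c₂ : ℝ → ℝ) := by
  unfold c₂
  exact Continuous.div (by fun_prop) (by fun_prop) fun x => (G.den_pos x).ne'

lemma exists_dir (v₁ v₂ : ℝ) : ∃ x : ℝ, G.c₁ x * v₂ - G.c₂ x * v₁ = 0 := by
  have hd := G.d_pos
  by_cases h : v₂ = 0
  · exact ⟨0, by simp [h, c₂]⟩
  have hs : √(v₁ ^ 2 + G.d * v₂ ^ 2) ^ 2 = v₁ ^ 2 + G.d * v₂ ^ 2 := Real.sq_sqrt (by positivity)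
  refine ⟨(v₁ + √(v₁ ^ 2 + G.d * v₂ ^ 2)) / v₂, ?_⟩
  set x := (v₁ + √(v₁ ^ 2 + G.d * v₂ ^ 2)) / v₂ with hx
  have e : x * v₂ = v₁ + √(v₁ ^ 2 + G.d * v₂ ^ 2) := by rw [hx]; field_simp
  have hden := (G.den_pos x).ne'
  simp only [c₁, c₂]
  field_simp
  refine mul_right_cancel₀ h ?_
  have e2 : (x * v₂ - v₁) ^ 2 = v₁ ^ 2 + G.d * v₂ ^ 2 := by rw [e]; linear_combination hs
  linear_combination e2

lemma dense_transcendental : Dense {x : ℝ | Transcendental ℚ x} := by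
  have := (Algebraic.countable ℚ ℝ).dense_compl ℝ
  exact this

/-- As the direction approaches that of `(a₁, a₂)`, the translation becomes small relative to the
period, so its order exceeds any bound; by `alg_transfer` it is then infinite for every
transcendental parameter. -/
lemma not_tors (hne : G.a₁ * (G.a₁ - G.b₁) + G.d * G.a₂ * (G.a₂ - G.b₂) ≠ 0) {x : ℝ}
    (hx : Transcendental ℚ x) (N : ℕ) (hN : 1 ≤ N) : ¬ (G.par x).Tors N := by
  intro hT
  obtain ⟨n, hn⟩ := (G.good hx).exists_alg ⟨N, hN, hT⟩
  obtain ⟨x₀, hx₀⟩ := G.exists_dir G.a₁ G.a₂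
  have hd := G.d_pos
  have hu := G.c_unit x₀
  have : (𝓝[{x : ℝ | Transcendental ℚ x}] x₀).NeBot :=
    mem_closure_iff_nhdsWithin_neBot.1 (dense_transcendental x₀)
  have t1 : Tendsto (G.c₁ : ℝ → ℝ) (𝓝[{x : ℝ | Transcendental ℚ x}] x₀) (𝓝 (G.c₁ x₀)) :=
    G.continuous_c₁.continuousAt.tendsto.mono_left nhdsWithin_le_nhds
  have t2 : Tendsto (G.c₂ : ℝ → ℝ) (𝓝[{x : ℝ | Transcendental ℚ x}] x₀) (𝓝 (G.c₂ x₀)) :=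
    G.continuous_c₂.continuousAt.tendsto.mono_left nhdsWithin_le_nhds
  -- the direction is that of the first vector: `a = α • c`
  set α : ℝ := G.a₁ * G.c₁ x₀ + G.d * G.a₂ * G.c₂ x₀ with hα
  have ea1 : (G.a₁ : ℝ) = α * G.c₁ x₀ := by
    rw [hα]; linear_combination (-(G.a₁ : ℝ)) * hu - G.d * G.c₂ x₀ * hx₀
  have ea2 : (G.a₂ : ℝ) = α * G.c₂ x₀ := by
    rw [hα]; linear_combination (-(G.a₂ : ℝ)) * hu + G.c₁ x₀ * hx₀
  have hb : G.c₁ x₀ * G.b₂ - G.c₂ x₀ * G.b₁ ≠ 0 := by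
    have := G.hab_real
    contrapose! this
    rw [ea1, ea2]; linear_combination α * this
  have hsig : (G.par x₀).sig ≠ 0 := by
    have h1 : (G.a₁ : ℝ) * (G.a₁ - G.b₁) + G.d * G.a₂ * (G.a₂ - G.b₂) ≠ 0 := by exact_mod_cast hne
    contrapose! h1
    rw [sig_eq] at h1
    push_cast at h1
    linear_combination α * h1 + (G.a₁ - G.b₁) * ea1 + G.d * (G.a₂ - G.b₂) * ea2
  have deg := Par.degenerate (l := 𝓝[{x : ℝ | Transcendental ℚ x}] x₀)
    (Q := fun x => G.par x) (R := G.par x₀)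
    (by simp only [par]; exact (t1.const_mul _).add (t2.const_mul _))
    (by simp only [par]; exact (t1.const_mul _).add (t2.const_mul _))
    (by simp only [par]; exact tendsto_const_nhds) (by simp only [par]; exact tendsto_const_nhds)
    (by filter_upwards [self_mem_nhdsWithin] with x hx using G.good hx)
    (by have := G.gram x₀ G.a₁ G.a₂
        rw [hx₀] at this
        simp only [par]; linarith)
    (by have := G.gram x₀ G.b₁ G.b₂
        have h2 : 0 < (G.d : ℝ) * (G.c₁ x₀ * G.b₂ - G.c₂ x₀ * G.b₁) ^ 2 := by positivity
        simp only [par]; linarith)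
    (by rw [B_eq, hx₀]
        simp [hsig, hd.ne', hb])
    ((n + 2 : ℕ) : ℝ) (by positivity)
  obtain ⟨y, hy, hy'⟩ := (deg.and self_mem_nhdsWithin).exists
  obtain ⟨k, hk, hkn, hkT⟩ := (G.good hy').tors_of_alg (G.alg_transfer hx hy' hn)
  exact (G.good hy').not_tors hk hkn hy hkT

end Cfg

/-! ### Rational points -/

lemma isRat_iff {x : ℝ} : IsRat x ↔ x ∈ (Rat.castHom ℝ).fieldRange := Iff.rfl

lemma isRat_cast (q : ℚ) : IsRat (q : ℝ) := ⟨q, rfl⟩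
lemma isRat_two : IsRat 2 := ⟨2, by norm_num⟩
lemma _root_.IsRat.add {x y : ℝ} (hx : IsRat x) (hy : IsRat y) : IsRat (x + y) := by
  rw [isRat_iff] at *; exact add_mem hx hy
lemma _root_.IsRat.sub {x y : ℝ} (hx : IsRat x) (hy : IsRat y) : IsRat (x - y) := by
  rw [isRat_iff] at *; exact sub_mem hx hy
lemma _root_.IsRat.mul {x y : ℝ} (hx : IsRat x) (hy : IsRat y) : IsRat (x * y) := by
  rw [isRat_iff] at *; exact mul_mem hx hy
lemma _root_.IsRat.div {x y : ℝ} (hx : IsRat x) (hy : IsRat y) : IsRat (x / y) := by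
  rw [isRat_iff] at *; exact div_mem hx hy
lemma _root_.IsRat.neg {x : ℝ} (hx : IsRat x) : IsRat (-x) := by
  rw [isRat_iff] at *; exact neg_mem hx
lemma _root_.IsRat.pow {x : ℝ} (hx : IsRat x) (n : ℕ) : IsRat (x ^ n) := by
  rw [isRat_iff] at *; exact pow_mem hx n
lemma _root_.IsRat.abs {x : ℝ} (hx : IsRat x) : IsRat |x| := by
  rcases abs_choice x with h | h <;> rw [h]
  exacts [hx, hx.neg]

namespace Par

/-- Data with rational coefficients and nonnegative squared distances. -/
structure RatPar (P : Par ℝ) : Prop where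
  s₁ : IsRat P.s₁
  s₂ : IsRat P.s₂
  n₁ : IsRat P.n₁
  n₂ : IsRat P.n₂
  q₁ : ∀ t, 0 ≤ P.q₁ t
  q₂ : ∀ t, 0 ≤ P.q₂ t

variable {P : Par ℝ}

/-- A parameter at which both distances are rational. -/
def RatAt (P : Par ℝ) (t : ℝ) : Prop := IsRat t ∧ IsRat (√(P.q₁ t)) ∧ IsRat (√(P.q₂ t))

lemma RatPar.sig (h : P.RatPar) : IsRat P.sig := h.s₁.sub h.s₂
lemma RatPar.nu (h : P.RatPar) : IsRat P.nu := h.n₁.sub h.n₂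
lemma RatPar.B (h : P.RatPar) {F : ℝ} (hF : IsRat F) : IsRat (P.B F) :=
  ((h.s₁.add h.s₂).mul hF).sub (h.sig.mul h.nu)
lemma RatPar.C (h : P.RatPar) {F : ℝ} (hF : IsRat F) : IsRat (P.C F) := by
  have h4 : IsRat 4 := ⟨4, by norm_num⟩
  exact (((hF.add h.nu).pow 2).sub ((h4.mul hF).mul h.n₁)).div h4
lemma RatPar.D (h : P.RatPar) {F : ℝ} (hF : IsRat F) : IsRat (P.D F) := (h.sig.pow 2).sub hF

/-- If the distances have sum or difference `g`, then they are `(g² ± L) / (2 g)` up to sign, where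
`L` is the difference of their squares. -/
lemma RatPar.ratAt_of_root (h : P.RatPar) {g t : ℝ} (hg : IsRat g) (hg0 : g ≠ 0) (ht : IsRat t)
    (hr : P.D (g ^ 2) * t ^ 2 + P.B (g ^ 2) * t + P.C (g ^ 2) = 0) : P.RatAt t := by
  have hq := P.quad_eq (g ^ 2) t
  rw [hr, mul_zero] at hq
  have hL : IsRat (P.q₁ t - P.q₂ t) := by
    have e : P.q₁ t - P.q₂ t = P.nu - 2 * P.sig * t := by
      simp only [Par.q₁, Par.q₂, Par.nu, Par.sig]; ring
    rw [e]
    exact h.nu.sub ((isRat_two.mul h.sig).mul ht)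
  refine ⟨ht, ?_, ?_⟩
  · have e : P.q₁ t = ((g ^ 2 + (P.q₁ t - P.q₂ t)) / (2 * g)) ^ 2 := by
      field_simp; linear_combination -hq
    rw [e, Real.sqrt_sq_eq_abs]
    exact (((hg.pow 2).add hL).div (isRat_two.mul hg)).abs
  · have e : P.q₂ t = ((g ^ 2 - (P.q₁ t - P.q₂ t)) / (2 * g)) ^ 2 := by
      field_simp; linear_combination -hq
    rw [e, Real.sqrt_sq_eq_abs]
    exact (((hg.pow 2).sub hL).div (isRat_two.mul hg)).abs

lemma RatPar.ratAt_t₁ (h : P.RatPar) (hB : P.B (P.sig ^ 2) ≠ 0) : P.RatAt P.t₁ := by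
  have hs : P.sig ≠ 0 := by
    contrapose! hB
    simp [Par.B, hB]
  refine h.ratAt_of_root h.sig hs ?_ (P.quad_t₁ hB)
  exact (h.C (h.sig.pow 2)).neg.div (h.B (h.sig.pow 2))

lemma RatPar.ratAt_inv (h : P.RatPar) {ε t : ℝ} (hε : ε = 1 ∨ ε = -1) (ht : P.RatAt t)
    (hD : P.D (P.Fe ε t) ≠ 0) : P.RatAt (P.inv ε t) := by
  obtain ⟨ht, h1, h2⟩ := ht
  have e1 := Real.sq_sqrt (h.q₁ t)
  have e2 := Real.sq_sqrt (h.q₂ t)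
  have hεr : IsRat ε := by
    rcases hε with rfl | rfl
    exacts [⟨1, by norm_num⟩, ⟨-1, by norm_num⟩]
  have hε2 : ε ^ 2 = 1 := by rcases hε with rfl | rfl <;> norm_num
  have hF : P.Fe ε t = (√(P.q₁ t) + ε * √(P.q₂ t)) ^ 2 := by
    simp only [Par.Fe, Par.W, Real.sqrt_mul (h.q₁ t)]
    linear_combination -e1 - e2 - √(P.q₂ t) ^ 2 * hε2
  have hg : IsRat (√(P.q₁ t) + ε * √(P.q₂ t)) := h1.add (hεr.mul h2)
  by_cases hg0 : √(P.q₁ t) + ε * √(P.q₂ t) = 0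
  · have e : P.inv ε t = t := by
      rw [hg0] at hF
      have hL : P.nu = 2 * P.sig * t := by
        have : P.q₁ t = P.q₂ t := by
          rw [← e1, ← e2]
          linear_combination (√(P.q₁ t) - ε * √(P.q₂ t)) * hg0 + √(P.q₂ t) ^ 2 * hε2
        simp only [Par.q₁, Par.q₂] at this
        simp only [Par.nu, Par.sig]
        linear_combination this
      have hD' : P.sig ≠ 0 := by
        contrapose! hD
        simp [Par.D, hF, hD]
      simp only [Par.inv, Par.kap, hF, Par.B, Par.D, hL]
      field_simp
      ring
    rw [e]
    exact ⟨ht, h1, h2⟩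
  · refine h.ratAt_of_root hg hg0 ?_ ?_
    · have := hg.pow 2
      rw [← hF] at this
      exact ((h.B this).neg.div (h.D this)).sub ht
    · rw [← hF]
      refine P.quad_kap hD ?_
      have := P.quad_eq (P.Fe ε t) t
      rw [hF] at this ⊢
      have e3 : ((√(P.q₁ t) + ε * √(P.q₂ t)) ^ 2) ^ 2 - 2 * (√(P.q₁ t) + ε * √(P.q₂ t)) ^ 2 *
          (P.q₁ t + P.q₂ t) + (P.q₁ t - P.q₂ t) ^ 2 = 0 := by
        generalize √(P.q₁ t) = y at *
        generalize √(P.q₂ t) = z at *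
        rw [← e1, ← e2]
        rcases hε with rfl | rfl <;> ring
      linarith

end Par

namespace Cfg
variable (G : Cfg)

lemma ratPar {x : ℝ} (hx : IsRat x) : (G.par x).RatPar := by
  have hd := G.d_pos
  have h1 : IsRat (G.c₁ x) :=
    ((hx.pow 2).sub (isRat_cast _)).div ((hx.pow 2).add (isRat_cast _))
  have h2 : IsRat (G.c₂ x) := (isRat_two.mul hx).div ((hx.pow 2).add (isRat_cast _))
  refine ⟨?_, ?_, ?_, ?_, fun t => ?_, fun t => ?_⟩
  · exact ((isRat_cast _).mul h1).add (((isRat_cast _).mul (isRat_cast _)).mul h2)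
  · exact ((isRat_cast _).mul h1).add (((isRat_cast _).mul (isRat_cast _)).mul h2)
  · exact ((isRat_cast _).pow 2).add ((isRat_cast _).mul ((isRat_cast _).pow 2))
  · exact ((isRat_cast _).pow 2).add ((isRat_cast _).mul ((isRat_cast _).pow 2))
  · rw [q₁_eq]; positivity
  · rw [q₂_eq]; positivity

/-- The points `t • (c₁ x, c₂ x)` with `x` and `t` rational and rational distances to
`(a₁, a₂)` and `(b₁, b₂)`, in terms of `(x, t)`. -/
def pts : Set (ℝ × ℝ) := {p | IsRat p.1 ∧ (G.par p.1).RatAt p.2}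

lemma continuous_par_q₁ : Continuous fun p : ℝ × ℝ => (G.par p.1).q₁ p.2 := by
  have := G.continuous_c₁
  have := G.continuous_c₂
  simp only [Par.q₁, par]; fun_prop

lemma continuous_par_q₂ : Continuous fun p : ℝ × ℝ => (G.par p.1).q₂ p.2 := by
  have := G.continuous_c₁
  have := G.continuous_c₂
  simp only [Par.q₂, par]; fun_prop

lemma continuous_par_Fe (ε : ℝ) : Continuous fun p : ℝ × ℝ => (G.par p.1).Fe ε p.2 := by
  have := G.continuous_par_q₁
  have := G.continuous_par_q₂
  simp only [Par.Fe, Par.W]; fun_prop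

lemma continuous_par_D {f : ℝ × ℝ → ℝ} (hf : Continuous f) :
    Continuous fun p : ℝ × ℝ => (G.par p.1).D (f p) := by
  have := G.continuous_c₁
  have := G.continuous_c₂
  simp only [Par.D, Par.sig, par]; fun_prop

lemma continuous_par_B {f : ℝ × ℝ → ℝ} (hf : Continuous f) :
    Continuous fun p : ℝ × ℝ => (G.par p.1).B (f p) := by
  have := G.continuous_c₁
  have := G.continuous_c₂
  simp only [Par.B, Par.sig, Par.nu, par]; fun_prop

lemma continuous_par_C {f : ℝ × ℝ → ℝ} (hf : Continuous f) :
    Continuous fun p : ℝ × ℝ => (G.par p.1).C (f p) := by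
  simp only [Par.C, Par.nu, par]; fun_prop

lemma continuous_par_sig : Continuous fun p : ℝ × ℝ => (G.par p.1).sig := by
  have := G.continuous_c₁
  have := G.continuous_c₂
  simp only [Par.sig, par]; fun_prop

/-- Continuity carries the closure of the rational points through the involution, also over
irrational `x`. -/
lemma closure_inv {ε : ℝ} (hε : ε = 1 ∨ ε = -1) {x t : ℝ} (h : (x, t) ∈ closure G.pts)
    (hD : (G.par x).D ((G.par x).Fe ε t) ≠ 0) : (x, (G.par x).inv ε t) ∈ closure G.pts := by
  have hF := G.continuous_par_Fe ε
  have hDc := G.continuous_par_D hF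
  have hc : ContinuousAt (fun p : ℝ × ℝ => (p.1, (G.par p.1).inv ε p.2)) (x, t) := by
    have hdiv : ContinuousAt (fun p : ℝ × ℝ => -(G.par p.1).B ((G.par p.1).Fe ε p.2) /
        (G.par p.1).D ((G.par p.1).Fe ε p.2)) (x, t) :=
      ContinuousAt.div (G.continuous_par_B hF).neg.continuousAt hDc.continuousAt hD
    exact continuousAt_fst.prodMk (hdiv.sub continuousAt_snd)
  rw [mem_closure_iff_frequently] at h ⊢
  have hev : ∀ᶠ p : ℝ × ℝ in 𝓝 (x, t), (G.par p.1).D ((G.par p.1).Fe ε p.2) ≠ 0 :=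
    hDc.continuousAt.eventually_ne hD
  have hfr : ∃ᶠ p : ℝ × ℝ in 𝓝 (x, t), (p.1, (G.par p.1).inv ε p.2) ∈ G.pts := by
    refine (h.and_eventually hev).mono ?_
    rintro p ⟨⟨hy, hs⟩, hDy⟩
    exact ⟨hy, (G.ratPar hy).ratAt_inv hε hs hDy⟩
  exact hc.tendsto.frequently hfr

lemma closure_t₁ {x : ℝ} (hB : (G.par x).B ((G.par x).sig ^ 2) ≠ 0) :
    (x, (G.par x).t₁) ∈ closure G.pts := by
  have hs : Continuous fun p : ℝ × ℝ => (G.par p.1).sig ^ 2 := G.continuous_par_sig.pow 2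
  have hBc := (G.continuous_par_B hs).comp (Continuous.prodMk_left (0 : ℝ))
  have hCc := (G.continuous_par_C hs).comp (Continuous.prodMk_left (0 : ℝ))
  have hc : ContinuousAt (fun y : ℝ => (y, (G.par y).t₁)) x :=
    continuousAt_id.prodMk (ContinuousAt.div hCc.neg.continuousAt hBc.continuousAt hB)
  rw [mem_closure_iff_frequently]
  have hd : x ∈ closure (range ((↑) : ℚ → ℝ)) := Rat.denseRange_cast x
  rw [mem_closure_iff_frequently] at hd
  have hev := hBc.continuousAt.eventually_ne hB
  refine hc.tendsto.frequently (p := (· ∈ G.pts)) ((hd.and_eventually hev).mono ?_)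
  rintro y ⟨hy, hBy⟩
  exact ⟨hy, (G.ratPar hy).ratAt_t₁ hBy⟩

lemma dense_pts (hne : G.a₁ * (G.a₁ - G.b₁) + G.d * G.a₂ * (G.a₂ - G.b₂) ≠ 0) :
    Dense G.pts := by
  rw [← dense_closure]
  refine (dense_transcendental.prod (dense_univ (X := ℝ))).mono ?_
  rintro ⟨x, t⟩ ⟨hx : Transcendental ℚ x, -⟩
  have h := G.good hx
  have hX : Dense {s | (x, s) ∈ closure G.pts} :=
    h.dense_of_not_tors (G.not_tors hne hx) (G.closure_t₁ h.hB)
      (fun s hs => G.closure_inv (Or.inl rfl) hs (h.D_one s))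
      (fun s hs hs1 => G.closure_inv (Or.inr rfl) hs (h.D_neg_one hs1))
  have hcl : IsClosed {s | (x, s) ∈ closure G.pts} :=
    isClosed_closure.preimage (Continuous.prodMk_right x)
  exact hcl.closure_subset (hX t)

/-- The points with rational distances to the origin, `(a₁, a₂)` and `(b₁, b₂)`. -/
def good_pts : Set (ℝ × ℝ) := {p | IsRat (√(p.1 ^ 2 + G.d * p.2 ^ 2)) ∧
  IsRat (√((p.1 - G.a₁) ^ 2 + G.d * (p.2 - G.a₂) ^ 2)) ∧
  IsRat (√((p.1 - G.b₁) ^ 2 + G.d * (p.2 - G.b₂) ^ 2))}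

lemma dense_good_pts_aux (hne : G.a₁ * (G.a₁ - G.b₁) + G.d * G.a₂ * (G.a₂ - G.b₂) ≠ 0) :
    Dense G.good_pts := by
  have h1 := G.continuous_c₁
  have h2 := G.continuous_c₂
  have hc : Continuous fun p : ℝ × ℝ => (p.2 * G.c₁ p.1, p.2 * G.c₂ p.1) := by fun_prop
  have hsurj : Function.Surjective fun p : ℝ × ℝ => (p.2 * G.c₁ p.1, p.2 * G.c₂ p.1) := by
    rintro ⟨v₁, v₂⟩
    obtain ⟨x, hx⟩ := G.exists_dir v₁ v₂
    have hu := G.c_unit x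
    refine ⟨(x, v₁ * G.c₁ x + G.d * v₂ * G.c₂ x), Prod.ext ?_ ?_⟩
    · simp only
      linear_combination v₁ * hu + G.d * G.c₂ x * hx
    · simp only
      linear_combination v₂ * hu - G.c₁ x * hx
  refine (hsurj.denseRange.dense_image hc (G.dense_pts hne)).mono ?_
  rintro _ ⟨⟨x, t⟩, ⟨-, ht, h1, h2⟩, rfl⟩
  rw [q₁_eq] at h1
  rw [q₂_eq] at h2
  refine ⟨?_, h1, h2⟩
  have e : (t * G.c₁ x) ^ 2 + G.d * (t * G.c₂ x) ^ 2 = t ^ 2 := by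
    linear_combination t ^ 2 * G.c_unit x
  simp only [e, Real.sqrt_sq_eq_abs]
  exact ht.abs

theorem dense_good_pts : Dense G.good_pts := by
  by_cases hne : G.a₁ * (G.a₁ - G.b₁) + G.d * G.a₂ * (G.a₂ - G.b₂) = 0
  · have hne' : G.swap.a₁ * (G.swap.a₁ - G.swap.b₁) +
        G.swap.d * G.swap.a₂ * (G.swap.a₂ - G.swap.b₂) ≠ 0 := by
      simp only [swap]
      intro h
      have h0 : (G.a₁ - G.b₁) ^ 2 + G.d * (G.a₂ - G.b₂) ^ 2 = 0 := by linear_combination hne + h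
      have hd := G.hd
      rcases G.ne_sub with h' | h'
      · have : 0 < (G.a₁ - G.b₁) ^ 2 + G.d * (G.a₂ - G.b₂) ^ 2 := by positivity
        exact this.ne' h0
      · have : 0 < (G.a₁ - G.b₁) ^ 2 + G.d * (G.a₂ - G.b₂) ^ 2 := by positivity
        exact this.ne' h0
    exact (G.swap.dense_good_pts_aux hne').mono fun p hp => ⟨hp.1, hp.2.2, hp.2.1⟩
  · exact G.dense_good_pts_aux hne

end Cfg

/-! ### Gram matrices in the Euclidean plane -/

section Plane

variable {u v : EuclideanSpace ℝ (Fin 2)}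

lemma exists_coord (h : LinearIndependent ℝ ![u, v]) (w : EuclideanSpace ℝ (Fin 2)) :
    ∃ x y : ℝ, w = x • u + y • v := by
  have hs : Submodule.span ℝ (range ![u, v]) = ⊤ :=
    h.span_eq_top_of_card_eq_finrank (by simp)
  have hw : w ∈ Submodule.span ℝ (range ![u, v]) := hs ▸ Submodule.mem_top
  rw [Matrix.range_cons, Matrix.range_cons, Matrix.range_empty, union_empty, singleton_union,
    Submodule.mem_span_pair] at hw
  obtain ⟨x, y, hxy⟩ := hw
  exact ⟨x, y, hxy.symm⟩

lemma norm_sq_comb (x y : ℝ) (u v : EuclideanSpace ℝ (Fin 2)) :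
    ‖x • u + y • v‖ ^ 2 = x ^ 2 * ‖u‖ ^ 2 + 2 * (x * y) * ⟪u, v⟫ + y ^ 2 * ‖v‖ ^ 2 := by
  rw [norm_add_sq_real, norm_smul, norm_smul, mul_pow, mul_pow, Real.norm_eq_abs, Real.norm_eq_abs,
    sq_abs, sq_abs, real_inner_smul_left, real_inner_smul_right]
  ring

lemma gram_ne (h : LinearIndependent ℝ ![u, v]) :
    ‖u‖ ^ 2 * ‖v‖ ^ 2 - ⟪u, v⟫ ^ 2 ≠ 0 := by
  intro h0
  have e : ‖(‖v‖ ^ 2) • u + (-⟪u, v⟫) • v‖ ^ 2 = 0 := by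
    rw [norm_sq_comb]
    linear_combination ‖v‖ ^ 2 * h0
  have e2 := norm_eq_zero.1 (pow_eq_zero_iff two_ne_zero |>.1 e)
  have h1 := (LinearIndependent.pair_iff.1 h _ _ e2).1
  have h2 : v = 0 := norm_eq_zero.1 (pow_eq_zero_iff two_ne_zero |>.1 h1)
  exact h.ne_zero 1 (by simpa using h2)

lemma coord_eq (h : LinearIndependent ℝ ![u, v]) (w : EuclideanSpace ℝ (Fin 2)) :
    w = ((⟪w, u⟫ * ‖v‖ ^ 2 - ⟪w, v⟫ * ⟪u, v⟫) / (‖u‖ ^ 2 * ‖v‖ ^ 2 - ⟪u, v⟫ ^ 2)) • u +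
      ((⟪w, v⟫ * ‖u‖ ^ 2 - ⟪w, u⟫ * ⟪u, v⟫) / (‖u‖ ^ 2 * ‖v‖ ^ 2 - ⟪u, v⟫ ^ 2)) • v := by
  obtain ⟨x, y, rfl⟩ := exists_coord h w
  have := gram_ne h
  simp only [inner_add_left, real_inner_smul_left, real_inner_comm u v,
    real_inner_self_eq_norm_sq]
  congr 2
  · rw [eq_div_iff this]; ring
  · rw [eq_div_iff this]; ring

/-- If the values of a real quadratic polynomial are rational on a dense set of rational points,
then its quadratic part has rational coefficients: a `ℚ`-linear functional on `ℝ` that kills `1`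
turns the polynomial into one that vanishes on a dense set. -/
lemma isRat_of_dense {S : Set (ℝ × ℝ)} (hS : Dense S) {A B C E F G : ℝ}
    (h : ∀ p ∈ S, IsRat p.1 ∧ IsRat p.2 ∧
      IsRat (A * p.1 ^ 2 + B * (p.1 * p.2) + C * p.2 ^ 2 + E * p.1 + F * p.2 + G)) :
    IsRat A ∧ IsRat B ∧ IsRat C := by
  have key : ∀ φ : ℝ →ₗ[ℚ] ℚ, φ 1 = 0 → φ A = 0 ∧ φ B = 0 ∧ φ C = 0 := by
    intro φ hφ
    have hr : ∀ q : ℚ, φ q = 0 := by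
      intro q
      have : (q : ℝ) = q • (1 : ℝ) := by simp [Rat.smul_def]
      rw [this, map_smul, hφ, smul_zero]
    have h0 : ∀ p : ℝ × ℝ, (φ A : ℝ) * p.1 ^ 2 + φ B * (p.1 * p.2) + φ C * p.2 ^ 2 + φ E * p.1
        + φ F * p.2 + φ G = 0 := by
      have hc : IsClosed {p : ℝ × ℝ | (φ A : ℝ) * p.1 ^ 2 + φ B * (p.1 * p.2) + φ C * p.2 ^ 2
          + φ E * p.1 + φ F * p.2 + φ G = 0} := isClosed_eq (by fun_prop) continuous_const
      intro p
      refine hc.closure_subset_iff.2 ?_ (hS p)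
      rintro ⟨_, _⟩ hp
      obtain ⟨⟨a, rfl⟩, ⟨b, rfl⟩, ⟨c, hc⟩⟩ := h _ hp
      simp only at hc
      have e : (c : ℝ) = (a ^ 2) • A + (a * b) • B + (b ^ 2) • C + a • E + b • F + G := by
        simp only [Rat.smul_def, hc]; push_cast; ring
      have e2 := congrArg φ e
      simp only [hr, map_add, map_smul, smul_eq_mul] at e2
      simp only [mem_ofPred_eq]
      have e3 : (φ A) * a ^ 2 + φ B * (a * b) + φ C * b ^ 2 + φ E * a + φ F * b + φ G = 0 := by
        linear_combination -e2
      exact_mod_cast e3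
    have f1 := h0 (1, 0)
    have f2 := h0 (-1, 0)
    have f3 := h0 (0, 1)
    have f4 := h0 (0, -1)
    have f5 := h0 (0, 0)
    have f6 := h0 (1, 1)
    simp only at f1 f2 f3 f4 f5 f6
    refine ⟨?_, ?_, ?_⟩
    · have : (φ A : ℝ) = 0 := by linear_combination (f1 + f2) / 2 - f5
      exact_mod_cast this
    · have : (φ B : ℝ) = 0 := by linear_combination f6 - f1 - f3 + f5
      exact_mod_cast this
    · have : (φ C : ℝ) = 0 := by linear_combination (f3 + f4) / 2 - f5
      exact_mod_cast this
  have key2 : ∀ A : ℝ, (∀ φ : ℝ →ₗ[ℚ] ℚ, φ 1 = 0 → φ A = 0) → IsRat A := by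
    intro A hA
    by_contra hn
    have hn' : A ∉ Submodule.span ℚ {(1 : ℝ)} := by
      rw [Submodule.mem_span_singleton]
      rintro ⟨q, hq⟩
      exact hn ⟨q, by simpa [Rat.smul_def] using hq⟩
    obtain ⟨f, hf, hf'⟩ := Submodule.exists_le_ker_of_notMem hn'
    exact hf (hA f (hf' (Submodule.mem_span_singleton_self 1)))
  exact ⟨key2 A fun φ h => (key φ h).1, key2 B fun φ h => (key φ h).2.1,
    key2 C fun φ h => (key φ h).2.2⟩

lemma dist_sq (Q P₁ P₃ : EuclideanSpace ℝ (Fin 2)) :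
    ⟪Q - P₃, P₃ - P₁⟫ + ‖P₃ - P₁‖ ^ 2 / 2 = (dist Q P₁ ^ 2 - dist Q P₃ ^ 2) / 2 := by
  have e : Q - P₁ = (Q - P₃) + (P₃ - P₁) := by abel
  rw [dist_eq_norm, dist_eq_norm, e, norm_add_sq_real]
  ring

variable {P₁ P₂ P₃ : EuclideanSpace ℝ (Fin 2)}

/-- The rationality of the Gram matrix, from density of the points at rational distances. -/
lemma gram_isRat (h : LinearIndependent ℝ ![P₃ - P₁, P₃ - P₂])
    (hd : Dense {Q : EuclideanSpace ℝ (Fin 2) |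
      IsRat (dist Q P₁) ∧ IsRat (dist Q P₂) ∧ IsRat (dist Q P₃)}) :
    IsRat (‖P₃ - P₁‖ ^ 2) ∧ IsRat (⟪P₃ - P₁, P₃ - P₂⟫) ∧ IsRat (‖P₃ - P₂‖ ^ 2) := by
  have hΔ := gram_ne h
  have hco := coord_eq h
  have f1 := fun Q => dist_sq Q P₁ P₃
  have f2 := fun Q => dist_sq Q P₂ P₃
  set u := P₃ - P₁
  set v := P₃ - P₂
  set Δ := ‖u‖ ^ 2 * ‖v‖ ^ 2 - ⟪u, v⟫ ^ 2 with hΔd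
  have hc : Continuous fun Q : EuclideanSpace ℝ (Fin 2) =>
      (⟪Q - P₃, u⟫ + ‖u‖ ^ 2 / 2, ⟪Q - P₃, v⟫ + ‖v‖ ^ 2 / 2) := by fun_prop
  have hs : Function.Surjective fun Q : EuclideanSpace ℝ (Fin 2) =>
      (⟪Q - P₃, u⟫ + ‖u‖ ^ 2 / 2, ⟪Q - P₃, v⟫ + ‖v‖ ^ 2 / 2) := by
    rintro ⟨α, β⟩
    refine ⟨P₃ + ((((α - ‖u‖ ^ 2 / 2) * ‖v‖ ^ 2 - (β - ‖v‖ ^ 2 / 2) * ⟪u, v⟫) / Δ) • u +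
      (((β - ‖v‖ ^ 2 / 2) * ‖u‖ ^ 2 - (α - ‖u‖ ^ 2 / 2) * ⟪u, v⟫) / Δ) • v), ?_⟩
    simp only [add_sub_cancel_left, inner_add_left, real_inner_smul_left, real_inner_comm u v,
      real_inner_self_eq_norm_sq]
    refine Prod.ext ?_ ?_
    · simp only; field_simp; rw [hΔd]; ring
    · simp only; field_simp; rw [hΔd]; ring
  have hS := hs.denseRange.dense_image hc hd
  have hAr := isRat_of_dense hS (A := ‖v‖ ^ 2 / Δ) (B := -2 * ⟪u, v⟫ / Δ) (C := ‖u‖ ^ 2 / Δ)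
    (E := (‖v‖ ^ 2 / Δ) * (-‖u‖ ^ 2) + ⟪u, v⟫ * ‖v‖ ^ 2 / Δ)
    (F := (‖u‖ ^ 2 / Δ) * (-‖v‖ ^ 2) + ⟪u, v⟫ * ‖u‖ ^ 2 / Δ)
    (G := (‖v‖ ^ 2 * (‖u‖ ^ 2 / 2) ^ 2 - 2 * ⟪u, v⟫ * (‖u‖ ^ 2 / 2) * (‖v‖ ^ 2 / 2) +
      ‖u‖ ^ 2 * (‖v‖ ^ 2 / 2) ^ 2) / Δ) (by
    rintro _ ⟨Q, ⟨h1, h2, h3⟩, rfl⟩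
    refine ⟨?_, ?_, ?_⟩
    · simp only [f1]
      exact ((h1.pow 2).sub (h3.pow 2)).div isRat_two
    · simp only [f2]
      exact ((h2.pow 2).sub (h3.pow 2)).div isRat_two
    · have e : dist Q P₃ ^ 2 = (‖v‖ ^ 2 * ⟪Q - P₃, u⟫ ^ 2 - 2 * ⟪u, v⟫ * (⟪Q - P₃, u⟫ *
          ⟪Q - P₃, v⟫) + ‖u‖ ^ 2 * ⟪Q - P₃, v⟫ ^ 2) / Δ := by
        rw [dist_eq_norm]
        conv_lhs => rw [hco (Q - P₃)]
        rw [norm_sq_comb]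
        field_simp
        rw [hΔd]
        ring
      have := h3.pow 2
      rw [e] at this
      convert this using 1
      field_simp
      ring)
  obtain ⟨hC, hB, hA⟩ := hAr
  have hB' : IsRat (⟪u, v⟫ / Δ) := by
    have := hB.div isRat_two.neg
    convert this using 1
    ring
  have hD : IsRat Δ := by
    have := isRat_cast 1 |>.div ((hA.mul hC).sub (hB'.pow 2))
    convert this using 1
    have e : ‖u‖ ^ 2 / Δ * (‖v‖ ^ 2 / Δ) - (⟪u, v⟫ / Δ) ^ 2 = 1 / Δ := by
      field_simp
      exact hΔd.symm
    rw [e]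
    simp
  refine ⟨?_, ?_, ?_⟩
  · convert hA.mul hD using 1; field_simp
  · convert hB'.mul hD using 1; field_simp
  · convert hC.mul hD using 1; field_simp

lemma exists_rep (h : LinearIndependent ℝ ![P₃ - P₁, P₃ - P₂]) (hA : IsRat (‖P₃ - P₁‖ ^ 2))
    (hB : IsRat (⟪P₃ - P₁, P₃ - P₂⟫)) (hC : IsRat (‖P₃ - P₂‖ ^ 2)) {Q : EuclideanSpace ℝ (Fin 2)}
    (h1 : IsRat (dist Q P₁)) (h2 : IsRat (dist Q P₂)) (h3 : IsRat (dist Q P₃)) :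
    ∃ x y z : ℚ, z ≠ 0 ∧
      ‖(x : ℝ) • (P₃ - P₁) + (y : ℝ) • (P₃ - P₂)‖ ^ 2 = (z : ℝ) ^ 2 := by
  by_cases hQ : Q = P₃
  · subst hQ
    obtain ⟨z, hz⟩ := h1
    rw [dist_eq_norm] at hz
    refine ⟨1, 0, z, ?_, by simp [hz]⟩
    rintro rfl
    have h0 : Q - P₁ = 0 := norm_eq_zero.1 (by simpa using hz.symm)
    exact h.ne_zero 0 (by simpa using h0)
  · have hu : IsRat (⟪Q - P₃, P₃ - P₁⟫) := by
      have := (((h1.pow 2).sub (h3.pow 2)).div isRat_two).sub (hA.div isRat_two)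
      rw [← dist_sq] at this
      simpa using this
    have hv : IsRat (⟪Q - P₃, P₃ - P₂⟫) := by
      have := (((h2.pow 2).sub (h3.pow 2)).div isRat_two).sub (hC.div isRat_two)
      rw [← dist_sq] at this
      simpa using this
    have hΔ := (hA.mul hC).sub (hB.pow 2)
    obtain ⟨x, hx⟩ := ((hu.mul hC).sub (hv.mul hB)).div hΔ
    obtain ⟨y, hy⟩ := ((hv.mul hA).sub (hu.mul hB)).div hΔ
    obtain ⟨z, hz⟩ := h3
    refine ⟨x, y, z, ?_, ?_⟩
    · rintro rfl
      exact hQ (dist_eq_zero.1 (by simpa using hz.symm))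
    · rw [hx, hy, ← coord_eq h, hz, dist_eq_norm]

/-- A vector of rational length represented by the form, scaled to length one and completed to an
orthogonal basis, reduces the plane to the norm form of `Cfg`. -/
lemma dense_of_rep (h : LinearIndependent ℝ ![P₃ - P₁, P₃ - P₂]) (hA : IsRat (‖P₃ - P₁‖ ^ 2))
    (hB : IsRat (⟪P₃ - P₁, P₃ - P₂⟫)) (hC : IsRat (‖P₃ - P₂‖ ^ 2))
    (hr : ∃ x y z : ℚ, z ≠ 0 ∧
      ‖(x : ℝ) • (P₃ - P₁) + (y : ℝ) • (P₃ - P₂)‖ ^ 2 = (z : ℝ) ^ 2) :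
    Dense {Q : EuclideanSpace ℝ (Fin 2) |
      IsRat (dist Q P₁) ∧ IsRat (dist Q P₂) ∧ IsRat (dist Q P₃)} := by
  obtain ⟨x, y, z, hz, hxyz⟩ := hr
  have hzr : (z : ℝ) ≠ 0 := by exact_mod_cast hz
  obtain ⟨u, hu⟩ : ∃ u, u = P₃ - P₁ := ⟨_, rfl⟩
  obtain ⟨v, hv⟩ : ∃ v, v = P₃ - P₂ := ⟨_, rfl⟩
  rw [← hu, ← hv] at h hB hxyz
  rw [← hu] at hA
  rw [← hv] at hC
  obtain ⟨e, he⟩ : ∃ e : EuclideanSpace ℝ (Fin 2), e = (x / z : ℝ) • u + (y / z : ℝ) • v :=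
    ⟨_, rfl⟩
  have hee : ⟪e, e⟫ = 1 := by
    rw [real_inner_self_eq_norm_sq, he, norm_sq_comb]
    rw [norm_sq_comb] at hxyz
    field_simp
    linear_combination hxyz
  have heu : IsRat (⟪e, u⟫) := by
    rw [he, inner_add_left, real_inner_smul_left, real_inner_smul_left, real_inner_comm u v,
      real_inner_self_eq_norm_sq]
    exact (((isRat_cast x).div (isRat_cast z)).mul hA).add
      (((isRat_cast y).div (isRat_cast z)).mul hB)
  have hev : IsRat (⟪e, v⟫) := by
    rw [he, inner_add_left, real_inner_smul_left, real_inner_smul_left,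
      real_inner_self_eq_norm_sq]
    exact (((isRat_cast x).div (isRat_cast z)).mul hB).add
      (((isRat_cast y).div (isRat_cast z)).mul hC)
  obtain ⟨f, hf⟩ : ∃ f : EuclideanSpace ℝ (Fin 2), f = ⟪e, v⟫ • u + (-⟪e, u⟫) • v := ⟨_, rfl⟩
  have hef : ⟪e, f⟫ = 0 := by
    rw [hf, inner_add_right, real_inner_smul_right, real_inner_smul_right]
    ring
  have hf0 : f ≠ 0 := by
    intro h0
    rw [hf] at h0
    obtain ⟨g1, g2⟩ := LinearIndependent.pair_iff.1 h _ _ h0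
    have hw : ∀ w, ⟪w, e⟫ = x / z * ⟪w, u⟫ + y / z * ⟪w, v⟫ := by
      intro w
      rw [he, inner_add_right, real_inner_smul_right, real_inner_smul_right]
    have := hw e
    rw [g1, neg_eq_zero.1 g2, mul_zero, mul_zero, add_zero] at this
    rw [hee] at this
    exact one_ne_zero this
  have huf : IsRat (⟪u, f⟫) := by
    rw [hf, inner_add_right, real_inner_smul_right, real_inner_smul_right,
      real_inner_self_eq_norm_sq]
    exact (hev.mul hA).add (heu.neg.mul hB)
  have hvf : IsRat (⟪v, f⟫) := by
    rw [hf, inner_add_right, real_inner_smul_right, real_inner_smul_right, real_inner_comm u v,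
      real_inner_self_eq_norm_sq]
    exact (hev.mul hB).add (heu.neg.mul hC)
  have hd : IsRat (‖f‖ ^ 2) := by
    rw [hf, norm_sq_comb]
    exact (((hev.pow 2).mul hA).add ((isRat_two.mul (hev.mul heu.neg)).mul hB)).add
      ((heu.neg.pow 2).mul hC)
  have hdp : 0 < ‖f‖ ^ 2 := by have := norm_pos_iff.2 hf0; positivity
  have hnorm : ∀ p r : ℝ, ‖p • e + r • f‖ = √(p ^ 2 + ‖f‖ ^ 2 * r ^ 2) := by
    intro p r
    rw [← Real.sqrt_sq (norm_nonneg (p • e + r • f)), norm_sq_comb, hef,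
      ← real_inner_self_eq_norm_sq e, hee]
    congr 1
    ring
  have hli : LinearIndependent ℝ ![e, f] := by
    rw [LinearIndependent.pair_iff]
    intro s t hst
    have h1 := hnorm s t
    rw [hst, norm_zero] at h1
    have h2 : s ^ 2 + ‖f‖ ^ 2 * t ^ 2 = 0 := by
      refine le_antisymm (Real.sqrt_eq_zero'.1 h1.symm) (by positivity)
    have h3 : s = 0 := by
      by_contra hs
      have : 0 < s ^ 2 + ‖f‖ ^ 2 * t ^ 2 := by positivity
      exact this.ne' h2
    refine ⟨h3, ?_⟩
    by_contra ht
    have : 0 < s ^ 2 + ‖f‖ ^ 2 * t ^ 2 := by positivity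
    exact this.ne' h2
  have hco : ∀ w : EuclideanSpace ℝ (Fin 2), w = ⟪e, w⟫ • e + (⟪w, f⟫ / ‖f‖ ^ 2) • f := by
    intro w
    obtain ⟨p, r, rfl⟩ := exists_coord hli w
    simp only [inner_add_left, inner_add_right, real_inner_smul_left, real_inner_smul_right, hee,
      hef, real_inner_self_eq_norm_sq]
    congr 2 <;> field_simp <;> ring
  obtain ⟨a₁, ha₁⟩ := heu.neg
  obtain ⟨b₁, hb₁⟩ := hev.neg
  obtain ⟨a₂, ha₂⟩ := (huf.div hd).neg
  obtain ⟨b₂, hb₂⟩ := (hvf.div hd).neg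
  obtain ⟨d, hd⟩ := hd
  have hue : u = (-(a₁ : ℝ)) • e + (-(a₂ : ℝ)) • f := by
    rw [ha₁, ha₂, neg_neg, neg_neg]; exact hco u
  have hve : v = (-(b₁ : ℝ)) • e + (-(b₂ : ℝ)) • f := by
    rw [hb₁, hb₂, neg_neg, neg_neg]; exact hco v
  have hab : a₁ * b₂ - a₂ * b₁ ≠ 0 := by
    intro h0
    have h0' : (a₁ : ℝ) * b₂ - a₂ * b₁ = 0 := by exact_mod_cast h0
    have g1 : (b₂ : ℝ) • u + (-(a₂ : ℝ)) • v = 0 := by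
      rw [hue, hve]
      have : (b₂ : ℝ) • ((-(a₁ : ℝ)) • e + (-(a₂ : ℝ)) • f) + (-(a₂ : ℝ)) • ((-(b₁ : ℝ)) • e +
        (-(b₂ : ℝ)) • f) = (-((a₁ : ℝ) * b₂ - a₂ * b₁)) • e := by module
      rw [this, h0', neg_zero, zero_smul]
    have g2 : (b₁ : ℝ) • u + (-(a₁ : ℝ)) • v = 0 := by
      rw [hue, hve]
      have : (b₁ : ℝ) • ((-(a₁ : ℝ)) • e + (-(a₂ : ℝ)) • f) + (-(a₁ : ℝ)) • ((-(b₁ : ℝ)) • e +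
        (-(b₂ : ℝ)) • f) = ((a₁ : ℝ) * b₂ - a₂ * b₁) • f := by module
      rw [this, h0', zero_smul]
    have g3 := (LinearIndependent.pair_iff.1 h _ _ g1).2
    have g4 := (LinearIndependent.pair_iff.1 h _ _ g2).2
    have : u = 0 := by rw [hue, g3, g4]; simp
    exact h.ne_zero 0 (by simpa using this)
  have hd0 : 0 < d := by
    rw [← hd] at hdp
    exact_mod_cast hdp
  have hdense := (Cfg.mk d a₁ a₂ b₁ b₂ hd0 hab).dense_good_pts
  have hc : Continuous fun p : ℝ × ℝ => P₃ + (p.1 • e + p.2 • f) := by fun_prop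
  have hs : Function.Surjective fun p : ℝ × ℝ => P₃ + (p.1 • e + p.2 • f) := by
    intro Q
    obtain ⟨p, r, hpr⟩ := exists_coord hli (Q - P₃)
    exact ⟨(p, r), by simp [← hpr]⟩
  refine (hs.denseRange.dense_image hc hdense).mono ?_
  rintro _ ⟨⟨p, r⟩, ⟨h3, h1, h2⟩, rfl⟩
  simp only [hd] at h1 h2 h3
  refine ⟨?_, ?_, ?_⟩
  · have e1 : P₃ + (p • e + r • f) - P₁ = (p - a₁ : ℝ) • e + (r - a₂ : ℝ) • f := by
      rw [add_sub_right_comm, ← hu, hue]; module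
    rw [dist_eq_norm]
    simp only [e1, hnorm]
    exact h1
  · have e1 : P₃ + (p • e + r • f) - P₂ = (p - b₁ : ℝ) • e + (r - b₂ : ℝ) • f := by
      rw [add_sub_right_comm, ← hv, hve]; module
    rw [dist_eq_norm]
    simp only [e1, hnorm]
    exact h2
  · rw [dist_eq_norm]
    simp only [add_sub_cancel_left, hnorm]
    exact h3

lemma dist_isRat_iff :
    (∀ i j : Fin 3, IsRat (dist (![P₁, P₂, P₃] i) (![P₁, P₂, P₃] j) ^ 2)) ↔
      IsRat (‖P₃ - P₁‖ ^ 2) ∧ IsRat (⟪P₃ - P₁, P₃ - P₂⟫) ∧ IsRat (‖P₃ - P₂‖ ^ 2) := by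
  have e : ‖P₁ - P₂‖ ^ 2 = ‖P₃ - P₁‖ ^ 2 - 2 * ⟪P₃ - P₁, P₃ - P₂⟫ + ‖P₃ - P₂‖ ^ 2 := by
    rw [← norm_sub_sq_real, norm_sub_rev P₁ P₂]
    congr 2
    abel
  constructor
  · intro h
    have h1 := h 2 0
    have h2 := h 2 1
    have h3 := h 0 1
    simp only [dist_eq_norm, Matrix.cons_val] at h1 h2 h3
    refine ⟨h1, ?_, h2⟩
    have := ((h1.add h2).sub h3).div isRat_two
    rw [e] at this
    convert this using 1
    ring
  · rintro ⟨h1, h2, h3⟩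
    have h4 : IsRat (‖P₁ - P₂‖ ^ 2) := by
      rw [e]; exact (h1.sub (isRat_two.mul h2)).add h3
    have h0 : IsRat 0 := ⟨0, by simp⟩
    intro i j
    fin_cases i <;> fin_cases j <;>
      simp [dist_eq_norm, norm_sub_rev P₁ P₃, norm_sub_rev P₂ P₃, norm_sub_rev P₂ P₁, h0, h1, h3,
        h4]

end Plane

end RatDist

theorem rational_distances_three_points_dense_iff
    (P₁ P₂ P₃ : EuclideanSpace ℝ (Fin 2))
    (hna : LinearIndependent ℝ ![P₃ - P₁, P₃ - P₂]) :
    (Dense {Q : EuclideanSpace ℝ (Fin 2) |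
        IsRat (dist Q P₁) ∧ IsRat (dist Q P₂) ∧ IsRat (dist Q P₃)} ↔
      (IsRat (‖P₃ - P₁‖ ^ 2) ∧ IsRat (⟪P₃ - P₁, P₃ - P₂⟫) ∧ IsRat (‖P₃ - P₂‖ ^ 2) ∧
        ∃ x y z : ℚ, z ≠ 0 ∧
          ‖(x : ℝ) • (P₃ - P₁) + (y : ℝ) • (P₃ - P₂)‖ ^ 2 = (z : ℝ) ^ 2)) ∧
    ((IsRat (‖P₃ - P₁‖ ^ 2) ∧ IsRat (⟪P₃ - P₁, P₃ - P₂⟫) ∧ IsRat (‖P₃ - P₂‖ ^ 2) ∧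
        ∃ x y z : ℚ, z ≠ 0 ∧
          ‖(x : ℝ) • (P₃ - P₁) + (y : ℝ) • (P₃ - P₂)‖ ^ 2 = (z : ℝ) ^ 2) ↔
      ((∀ i j : Fin 3, IsRat (dist (![P₁, P₂, P₃] i) (![P₁, P₂, P₃] j) ^ 2)) ∧
        ∃ Q : EuclideanSpace ℝ (Fin 2),
          IsRat (dist Q P₁) ∧ IsRat (dist Q P₂) ∧ IsRat (dist Q P₃))) := by
  refine ⟨⟨fun hd => ?_, fun ⟨hA, hB, hC, hr⟩ => RatDist.dense_of_rep hna hA hB hC hr⟩,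
    ⟨fun ⟨hA, hB, hC, hr⟩ => ⟨RatDist.dist_isRat_iff.2 ⟨hA, hB, hC⟩,
      (RatDist.dense_of_rep hna hA hB hC hr).nonempty⟩, fun ⟨hij, Q, h1, h2, h3⟩ => ?_⟩⟩
  · obtain ⟨hA, hB, hC⟩ := RatDist.gram_isRat hna hd
    obtain ⟨Q, h1, h2, h3⟩ := hd.nonempty
    exact ⟨hA, hB, hC, RatDist.exists_rep hna hA hB hC h1 h2 h3⟩
  · obtain ⟨hA, hB, hC⟩ := RatDist.dist_isRat_iff.1 hij
    exact ⟨hA, hB, hC, RatDist.exists_rep hna hA hB hC h1 h2 h3⟩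
end
end

section
/- Let P₁, P₂, P₃ ∈ ℝ² be three non-aligned points, ordered so that the 2×2 real matrix T whose columns are the vectors P₃−P₁ and P₃−P₂ has positive determinant. Suppose T = A·D·U where A is an orthogonal 2×2 matrix, D is a diagonal matrix with positive diagonal entries d₁, d₂, and U is an upper triangular matrix with both diagonal entries equal to 1. Then the following are equivalent: (a) the quadratic form (x,y) ↦ ‖x·(P₃−P₁) + y·(P₃−P₂)‖² has all coefficients rational and there exist x, y, z ∈ ℚ with z ≠ 0 such that its value at (x,y) equals z²; (b) the numbers r := d₁² and s := d₂² are rational, there exist x, y ∈ ℚ with r·x² + s·y² = 1, and U has rational entries. -/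
/-!
Since `A` is orthogonal, the Gram matrix of `P₃ - P₁, P₃ - P₂` is `Tᵀ * T = Uᵀ * D ^ 2 * U`. With
`r = d₁ ^ 2`, `s = d₂ ^ 2` and `u` the off-diagonal entry of `U`, this reads `‖P₃ - P₁‖ ^ 2 = r`,
`⟪P₃ - P₁, P₃ - P₂⟫ = r * u`, `‖P₃ - P₂‖ ^ 2 = r * u ^ 2 + s`, so the quadratic form is
`r * (x + u * y) ^ 2 + s * y ^ 2`. As `r ≠ 0`, its coefficients are rational exactly when `r`, `s`
and `u` are, and then `(x, y, z) ↦ ((x + u * y) / z, y / z)` turns a rational point of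
`Q (x, y) = z ^ 2` with `z ≠ 0` into a rational point of `r * x ^ 2 + s * y ^ 2 = 1`; conversely
`(x, y)` comes from `(x - u * y, y, 1)`.
-/

open scoped RealInnerProductSpace
open Matrix

noncomputable section

/-- The equivalence in terms of the Gram entries `r`, `r * u`, `r * u ^ 2 + s`. -/
lemma isRat_gram_iff (r s u : ℝ) (hr : r ≠ 0) :
    ((IsRat r ∧ IsRat (r * u) ∧ IsRat (r * u ^ 2 + s) ∧
        ∃ x y z : ℚ, z ≠ 0 ∧
          r * ((x : ℝ) + u * y) ^ 2 + s * (y : ℝ) ^ 2 = (z : ℝ) ^ 2) ↔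
      (IsRat r ∧ IsRat s ∧ (∃ x y : ℚ, r * (x : ℝ) ^ 2 + s * (y : ℝ) ^ 2 = 1) ∧ IsRat u)) := by
  constructor
  · rintro ⟨⟨r', rfl⟩, ⟨m, hm⟩, ⟨n, hn⟩, x, y, z, hz, h⟩
    have hu : ((m / r' : ℚ) : ℝ) = u := by
      push_cast
      rw [hm]
      field_simp
    have hz' : (z : ℝ) ≠ 0 := by exact_mod_cast hz
    refine ⟨⟨r', rfl⟩, ⟨n - r' * (m / r') ^ 2, ?_⟩, ⟨(x + m / r' * y) / z, y / z, ?_⟩, _, hu⟩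
    · rw [Rat.cast_sub, Rat.cast_mul, Rat.cast_pow, hu, hn]
      ring
    · rw [Rat.cast_div, Rat.cast_add, Rat.cast_mul, hu, Rat.cast_div]
      field_simp
      linear_combination h
  · rintro ⟨⟨r', rfl⟩, ⟨s', rfl⟩, ⟨x, y, h⟩, ⟨u', rfl⟩⟩
    refine ⟨⟨r', rfl⟩, ⟨r' * u', by push_cast; ring⟩, ⟨r' * u' ^ 2 + s', by push_cast; ring⟩,
      x - u' * y, y, 1, one_ne_zero, ?_⟩
    push_cast
    linear_combination h

theorem admissible_iff_iwasawa
    (P₁ P₂ P₃ : EuclideanSpace ℝ (Fin 2))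
    (hna : LinearIndependent ℝ ![P₃ - P₁, P₃ - P₂])
    (T A D U : Matrix (Fin 2) (Fin 2) ℝ)
    (hT : T = Matrix.of fun i j => (![P₃ - P₁, P₃ - P₂] j) i)
    (hdet : 0 < T.det)
    (hTADU : T = A * D * U)
    (hA : Aᵀ * A = 1)
    (hD01 : D 0 1 = 0) (hD10 : D 1 0 = 0)
    (hD0 : 0 < D 0 0) (hD1 : 0 < D 1 1)
    (hU00 : U 0 0 = 1) (hU11 : U 1 1 = 1) (hU10 : U 1 0 = 0) :
    ((IsRat (‖P₃ - P₁‖ ^ 2) ∧ IsRat (⟪P₃ - P₁, P₃ - P₂⟫) ∧ IsRat (‖P₃ - P₂‖ ^ 2) ∧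
        ∃ x y z : ℚ, z ≠ 0 ∧
          ‖(x : ℝ) • (P₃ - P₁) + (y : ℝ) • (P₃ - P₂)‖ ^ 2 = (z : ℝ) ^ 2) ↔
      (IsRat ((D 0 0) ^ 2) ∧ IsRat ((D 1 1) ^ 2) ∧
        (∃ x y : ℚ, (D 0 0) ^ 2 * (x : ℝ) ^ 2 + (D 1 1) ^ 2 * (y : ℝ) ^ 2 = 1) ∧
        IsRat (U 0 1))) := by
  have hG : Tᵀ * T = Uᵀ * (Dᵀ * D) * U := by
    rw [hTADU, Matrix.transpose_mul, Matrix.transpose_mul]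
    calc Uᵀ * (Dᵀ * Aᵀ) * (A * D * U) = Uᵀ * Dᵀ * (Aᵀ * A) * D * U := by
          simp only [Matrix.mul_assoc]
      _ = Uᵀ * (Dᵀ * D) * U := by rw [hA]; simp only [Matrix.mul_assoc, Matrix.one_mul]
  have h00 := congrFun (congrFun hG 0) 0
  have h01 := congrFun (congrFun hG 0) 1
  have h11 := congrFun (congrFun hG 1) 1
  simp [Matrix.mul_apply, Fin.sum_univ_two, hT, hD01, hD10, hU00, hU11, hU10] at h00 h01 h11
  have e1 : ‖P₃ - P₁‖ ^ 2 = D 0 0 ^ 2 := by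
    simp [EuclideanSpace.real_norm_sq_eq, Fin.sum_univ_two]
    linear_combination h00
  have e2 : ⟪P₃ - P₁, P₃ - P₂⟫ = D 0 0 ^ 2 * U 0 1 := by
    simp [PiLp.inner_apply, Fin.sum_univ_two]
    linear_combination h01
  have e3 : ‖P₃ - P₂‖ ^ 2 = D 0 0 ^ 2 * U 0 1 ^ 2 + D 1 1 ^ 2 := by
    simp [EuclideanSpace.real_norm_sq_eq, Fin.sum_univ_two]
    linear_combination h11
  have e4 (x y : ℝ) : ‖x • (P₃ - P₁) + y • (P₃ - P₂)‖ ^ 2 =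
      D 0 0 ^ 2 * (x + U 0 1 * y) ^ 2 + D 1 1 ^ 2 * y ^ 2 := by
    rw [norm_add_sq_real, norm_smul, norm_smul, mul_pow, mul_pow, e1, e3, real_inner_smul_left,
      real_inner_smul_right, e2, Real.norm_eq_abs, Real.norm_eq_abs, sq_abs, sq_abs]
    ring
  simp only [e4]
  rw [e1, e2, e3]
  exact isRat_gram_iff _ _ _ (pow_ne_zero 2 hD0.ne')
end
end

section
/- Let P₁, P₂, P₃ ∈ ℝ² be three non-aligned points. The following are equivalent: (i) the set of points Q ∈ ℝ² such that the squared distances d(Q,P₁)², d(Q,P₂)², d(Q,P₃)² are all rational is dense in ℝ² for the Euclidean topology; (ii) the three numbers ‖P₃−P₁‖², ⟨P₃−P₁, P₃−P₂⟩, ‖P₃−P₂‖² are all rational; (iii) all squared distances d(Pᵢ,Pⱼ)² for i, j ∈ {1,2,3} are rational. Moreover, if these conditions hold, then the set of points Q ∈ ℝ² with d(Q,P₁)², d(Q,P₂)², d(Q,P₃)² all rational equals { P₃ + x·(P₃−P₁) + y·(P₃−P₂) : x, y ∈ ℚ }. -/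
/-!
Write `u = P₃ - P₁`, `w = P₃ - P₂`, with Gram entries `A = ‖u‖²`, `B = ⟪u, w⟫`, `C = ‖w‖²` and
Gram determinant `D = A * C - B ^ 2 ≠ 0`. For a point `Q` put `v = Q - P₃`, `r = ‖v‖²`,
`s = 2⟪v, u⟫ + A = d(Q, P₁)² - r` and `t = 2⟪v, w⟫ + C = d(Q, P₂)² - r`. The Gram identity
`D r = C⟪v, u⟫² - 2B⟪v, u⟫⟪v, w⟫ + A⟪v, w⟫²` (`gram_relation`) exhibits `4 r` as a quadratic polynomial
in `(s, t)` whose leading coefficients are `C / D`, `-2B / D`, `A / D`. If all three squared distances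
are rational for a dense set of `Q`, apply to this relation any `ℚ`-linear form `φ : ℝ → ℚ` killing `ℚ`:
the polynomial with coefficients `φ(C / D)`, … vanishes on a dense set of `(s, t)`, so identically,
by continuity. Since such forms detect irrationality (`isRat_of_forall_form`), `A / D`, `B / D`, `C / D`
are rational; hence so is `1 / D`, the determinant of the matrix they form, and finally `A`, `B`, `C`.

Conversely, if `A`, `B`, `C` are rational, Cramer's rule shows that the points with rational squared
distances are exactly those with rational coordinates in the frame `(P₃; u, w)`, a dense set. The
equivalence with the squared mutual distances is the identity `‖u - w‖² = A - 2B + C`.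
-/

open scoped RealInnerProductSpace

noncomputable section

/-! ### Rational real numbers -/

lemma IsRat.ratCast (q : ℚ) : IsRat (q : ℝ) := ⟨q, rfl⟩

lemma IsRat.ofNat (n : ℕ) [n.AtLeastTwo] : IsRat (OfNat.ofNat n : ℝ) :=
  ⟨OfNat.ofNat n, by simp⟩

lemma IsRat.add_s2 {x y : ℝ} (hx : IsRat x) (hy : IsRat y) : IsRat (x + y) := by
  obtain ⟨p, rfl⟩ := hx
  obtain ⟨q, rfl⟩ := hy
  exact ⟨p + q, by push_cast; rfl⟩

lemma IsRat.sub_s2 {x y : ℝ} (hx : IsRat x) (hy : IsRat y) : IsRat (x - y) := by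
  obtain ⟨p, rfl⟩ := hx
  obtain ⟨q, rfl⟩ := hy
  exact ⟨p - q, by push_cast; rfl⟩

lemma IsRat.mul_s2 {x y : ℝ} (hx : IsRat x) (hy : IsRat y) : IsRat (x * y) := by
  obtain ⟨p, rfl⟩ := hx
  obtain ⟨q, rfl⟩ := hy
  exact ⟨p * q, by push_cast; rfl⟩

lemma IsRat.div_s2 {x y : ℝ} (hx : IsRat x) (hy : IsRat y) : IsRat (x / y) := by
  obtain ⟨p, rfl⟩ := hx
  obtain ⟨q, rfl⟩ := hy
  exact ⟨p / q, by push_cast; rfl⟩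

lemma IsRat.pow_s2 {x : ℝ} (hx : IsRat x) (n : ℕ) : IsRat (x ^ n) := by
  obtain ⟨p, rfl⟩ := hx
  exact ⟨p ^ n, by push_cast; rfl⟩

/-- `ℚ`-linear forms on `ℝ` vanishing at `1` detect irrationality. -/
lemma isRat_of_forall_form {x : ℝ} (h : ∀ φ : ℝ →ₗ[ℚ] ℚ, φ 1 = 0 → φ x = 0) : IsRat x := by
  by_contra hx
  have hmem : x ∉ Submodule.span ℚ {(1 : ℝ)} := by
    intro hm
    obtain ⟨q, hq⟩ := Submodule.mem_span_singleton.1 hm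
    exact hx ⟨q, by simpa [Rat.smul_def] using hq⟩
  obtain ⟨φ, hφx, hφ⟩ := Submodule.exists_le_ker_of_notMem hmem
  exact hφx (h φ (hφ (Submodule.subset_span rfl)))

/-- A `ℚ`-linear form is linear with respect to rational real factors. -/
lemma form_mul_rat (φ : ℝ →ₗ[ℚ] ℚ) (x : ℝ) (q : ℚ) : φ (x * q) = φ x * q := by
  have := φ.map_smul q x
  rw [Rat.smul_def, mul_comm] at this
  rw [this, smul_eq_mul, mul_comm]

/-! ### Gram identities in the plane -/

/-- The plane with its Euclidean norm. -/
abbrev Plane := EuclideanSpace ℝ (Fin 2)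

lemma plane_inner (v w : Plane) : ⟪v, w⟫ = v 0 * w 0 + v 1 * w 1 := by
  simp [PiLp.inner_apply, Fin.sum_univ_two, mul_comm]

lemma plane_norm_sq (v : Plane) : ‖v‖ ^ 2 = v 0 ^ 2 + v 1 ^ 2 := by
  simp [EuclideanSpace.norm_sq_eq, Fin.sum_univ_two]

/-- The determinant of two independent vectors of the plane is nonzero. -/
lemma det_ne_zero_of_linearIndependent {u w : Plane} (h : LinearIndependent ℝ ![u, w]) :
    u 0 * w 1 - u 1 * w 0 ≠ 0 := by
  intro hd
  rw [LinearIndependent.pair_iff] at h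
  have h1 := h (w 1) (-u 1) (by ext i; fin_cases i <;> simp <;> linarith)
  have h0 := h (w 0) (-u 0) (by ext i; fin_cases i <;> simp <;> linarith)
  have hu : u = 0 := by
    ext i
    fin_cases i
    · simpa using h0.2
    · simpa using h1.2
  have := h 1 0 (by simp [hu])
  exact one_ne_zero this.1

/-- The Gram determinant of a pair of vectors. -/
def gramDet (u w : Plane) : ℝ := ‖u‖ ^ 2 * ‖w‖ ^ 2 - ⟪u, w⟫ ^ 2

lemma gramDet_ne_zero {u w : Plane} (h : LinearIndependent ℝ ![u, w]) : gramDet u w ≠ 0 := by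
  have hd := det_ne_zero_of_linearIndependent h
  have : gramDet u w = (u 0 * w 1 - u 1 * w 0) ^ 2 := by
    simp only [gramDet, plane_inner, plane_norm_sq]
    ring
  rw [this]
  exact pow_ne_zero 2 hd

/-- The Gram determinant of three vectors of the plane vanishes. -/
lemma gram_relation (u w v : Plane) :
    gramDet u w * ‖v‖ ^ 2 =
      ‖w‖ ^ 2 * ⟪v, u⟫ ^ 2 - 2 * ⟪u, w⟫ * ⟪v, u⟫ * ⟪v, w⟫ + ‖u‖ ^ 2 * ⟪v, w⟫ ^ 2 := by
  simp only [gramDet, plane_inner, plane_norm_sq]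
  ring

/-- Cramer's rule: the coordinates of `v` in the basis `(u, w)` in terms of inner products. -/
lemma gramDet_smul_eq (u w v : Plane) :
    gramDet u w • v = (‖w‖ ^ 2 * ⟪v, u⟫ - ⟪u, w⟫ * ⟪v, w⟫) • u +
      (‖u‖ ^ 2 * ⟪v, w⟫ - ⟪u, w⟫ * ⟪v, u⟫) • w := by
  ext i
  fin_cases i <;> simp [gramDet, plane_inner, plane_norm_sq] <;> ring

lemma eq_cramer {u w : Plane} (h : gramDet u w ≠ 0) (v : Plane) :
    v = ((‖w‖ ^ 2 * ⟪v, u⟫ - ⟪u, w⟫ * ⟪v, w⟫) / gramDet u w) • u +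
      ((‖u‖ ^ 2 * ⟪v, w⟫ - ⟪u, w⟫ * ⟪v, u⟫) / gramDet u w) • w := by
  have := congrArg (fun z => (gramDet u w)⁻¹ • z) (gramDet_smul_eq u w v)
  simpa only [smul_add, smul_smul, inv_mul_cancel₀ h, one_smul, div_eq_inv_mul] using this

/-- Every pair of reals is the pair of inner products of some vector with `u` and `w`. -/
lemma exists_inner_eq {u w : Plane} (h : gramDet u w ≠ 0) (a b : ℝ) :
    ∃ v : Plane, ⟪v, u⟫ = a ∧ ⟪v, w⟫ = b := by
  refine ⟨((‖w‖ ^ 2 * a - ⟪u, w⟫ * b) / gramDet u w) • u +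
    ((‖u‖ ^ 2 * b - ⟪u, w⟫ * a) / gramDet u w) • w, ?_, ?_⟩
  · rw [inner_add_left, real_inner_smul_left, real_inner_smul_left, real_inner_self_eq_norm_sq,
      real_inner_comm u w]
    field_simp
    unfold gramDet
    ring
  · rw [inner_add_left, real_inner_smul_left, real_inner_smul_left, real_inner_self_eq_norm_sq]
    field_simp
    unfold gramDet
    ring

/-! ### Quadratic polynomials with rational values -/

/-- A quadratic polynomial taking rational values at a dense set of points with rational coordinates
has rational leading coefficients. The coordinates are pulled back along a continuous surjection
`(s, t)` onto `ℝ²`, so that density is required in the source only. -/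
lemma isRat_coeffs {X : Type*} [TopologicalSpace X] {S : Set X} (hS : Dense S) {s t : X → ℝ}
    (hs : Continuous s) (ht : Continuous t) (hsurj : ∀ a b : ℝ, ∃ x, s x = a ∧ t x = b)
    {c₁ c₂ c₃ c₄ c₅ c₆ : ℝ}
    (hrat : ∀ x ∈ S, IsRat (s x) ∧ IsRat (t x) ∧ IsRat (c₁ * s x ^ 2 + c₂ * (s x * t x) +
      c₃ * t x ^ 2 + c₄ * s x + c₅ * t x + c₆)) :
    IsRat c₁ ∧ IsRat c₂ ∧ IsRat c₃ := by
  have key : ∀ φ : ℝ →ₗ[ℚ] ℚ, φ 1 = 0 → φ c₁ = 0 ∧ φ c₂ = 0 ∧ φ c₃ = 0 := by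
    intro φ hφ
    have hzero : (fun x => (φ c₁ : ℝ) * s x ^ 2 + φ c₂ * (s x * t x) + φ c₃ * t x ^ 2 +
        φ c₄ * s x + φ c₅ * t x + φ c₆) = fun _ => (0 : ℝ) := by
      refine Continuous.ext_on hS (by fun_prop) continuous_const ?_
      intro x hx
      obtain ⟨⟨p, hp⟩, ⟨q, hq⟩, ⟨r, hr⟩⟩ := hrat x hx
      have hφr : φ (r : ℝ) = 0 := by
        have := form_mul_rat φ 1 r
        rwa [one_mul, hφ, zero_mul] at this
      rw [hr, ← hp, ← hq] at hφr
      have e : c₁ * (p : ℝ) ^ 2 + c₂ * ((p : ℝ) * q) + c₃ * (q : ℝ) ^ 2 + c₄ * p + c₅ * q + c₆ =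
          c₁ * ((p ^ 2 : ℚ) : ℝ) + c₂ * ((p * q : ℚ) : ℝ) + c₃ * ((q ^ 2 : ℚ) : ℝ) +
            c₄ * (p : ℝ) + c₅ * (q : ℝ) + c₆ := by
        push_cast
        ring
      rw [e] at hφr
      simp only [map_add, form_mul_rat] at hφr
      simp only [← hp, ← hq]
      exact_mod_cast hφr
    have hall : ∀ a b : ℝ, (φ c₁ : ℝ) * a ^ 2 + φ c₂ * (a * b) + φ c₃ * b ^ 2 +
        φ c₄ * a + φ c₅ * b + φ c₆ = 0 := by
      intro a b
      obtain ⟨x, rfl, rfl⟩ := hsurj a b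
      exact congrFun hzero x
    have h00 := hall 0 0
    have h10 := hall 1 0
    have h10' := hall (-1) 0
    have h01 := hall 0 1
    have h01' := hall 0 (-1)
    have h11 := hall 1 1
    have e₁ : (φ c₁ : ℝ) = 0 := by linarith
    have e₂ : (φ c₂ : ℝ) = 0 := by linarith
    have e₃ : (φ c₃ : ℝ) = 0 := by linarith
    exact ⟨by exact_mod_cast e₁, by exact_mod_cast e₂, by exact_mod_cast e₃⟩
  exact ⟨isRat_of_forall_form fun φ hφ => (key φ hφ).1,
    isRat_of_forall_form fun φ hφ => (key φ hφ).2.1,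
    isRat_of_forall_form fun φ hφ => (key φ hφ).2.2⟩

/-! ### Points with rational squared distances -/

/-- The points at rational squared distance from each of three given points. -/
def ratDistSet (P₁ P₂ P₃ : Plane) : Set Plane :=
  {Q | IsRat (dist Q P₁ ^ 2) ∧ IsRat (dist Q P₂ ^ 2) ∧ IsRat (dist Q P₃ ^ 2)}

lemma dist_sq_eq (Q P P₃ : Plane) :
    dist Q P ^ 2 = dist Q P₃ ^ 2 + (2 * ⟪Q - P₃, P₃ - P⟫ + ‖P₃ - P‖ ^ 2) := by
  have : Q - P = (Q - P₃) + (P₃ - P) := by abel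
  rw [dist_eq_norm, dist_eq_norm, this, norm_add_sq_real]
  ring

lemma gram_isRat_of_dense {P₁ P₂ P₃ : Plane} (hD : gramDet (P₃ - P₁) (P₃ - P₂) ≠ 0)
    (hS : Dense (ratDistSet P₁ P₂ P₃)) :
    IsRat (‖P₃ - P₁‖ ^ 2) ∧ IsRat (⟪P₃ - P₁, P₃ - P₂⟫) ∧ IsRat (‖P₃ - P₂‖ ^ 2) := by
  have hDdef : gramDet (P₃ - P₁) (P₃ - P₂) =
    ‖P₃ - P₁‖ ^ 2 * ‖P₃ - P₂‖ ^ 2 - ⟪P₃ - P₁, P₃ - P₂⟫ ^ 2 := rfl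
  have hrel := gram_relation (P₃ - P₁) (P₃ - P₂)
  have hex := exists_inner_eq hD
  have d₁ := fun Q => dist_sq_eq Q P₁ P₃
  have d₂ := fun Q => dist_sq_eq Q P₂ P₃
  generalize hu : P₃ - P₁ = u at *
  generalize hw : P₃ - P₂ = w at *
  generalize gramDet u w = D at *
  generalize hA : ‖u‖ ^ 2 = A at *
  generalize hB : (⟪u, w⟫ : ℝ) = B at *
  generalize hC : ‖w‖ ^ 2 = C at *
  -- The coefficients come from expanding `(C (s - A)² - 2B (s - A) (t - C) + A (t - C)²) / D`.
  obtain ⟨h₁, h₂, h₃⟩ := isRat_coeffs hS (s := fun Q => 2 * ⟪Q - P₃, u⟫ + A)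
    (t := fun Q => 2 * ⟪Q - P₃, w⟫ + C) (by fun_prop) (by fun_prop)
    (fun a b => by
      obtain ⟨v, hv₁, hv₂⟩ := hex ((a - A) / 2) ((b - C) / 2)
      refine ⟨P₃ + v, ?_, ?_⟩
      · simp only [add_sub_cancel_left, hv₁]
        ring
      · simp only [add_sub_cancel_left, hv₂]
        ring)
    (c₁ := C / D) (c₂ := -2 * B / D) (c₃ := A / D)
    (c₄ := (2 * B * C - 2 * A * C) / D) (c₅ := (2 * A * B - 2 * A * C) / D)
    (c₆ := (A ^ 2 * C - 2 * A * B * C + A * C ^ 2) / D)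
    (by
      rintro Q ⟨r₁, r₂, r₃⟩
      refine ⟨?_, ?_, ?_⟩
      · have := r₁.sub_s2 r₃
        rwa [d₁ Q, add_sub_cancel_left] at this
      · have := r₂.sub_s2 r₃
        rwa [d₂ Q, add_sub_cancel_left] at this
      · have h4 := (IsRat.ofNat 4).mul_s2 r₃
        convert h4 using 1
        have := hrel (Q - P₃)
        rw [dist_eq_norm]
        field_simp
        linear_combination (-4) * this)
  have h₂' : IsRat (B / D) := by
    have := h₂.div_s2 ((IsRat.ofNat 2).sub_s2 (IsRat.ofNat 4))
    convert this using 1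
    ring
  have hDinv : IsRat (1 / D) := by
    have := (h₃.mul_s2 h₁).sub_s2 (h₂'.pow_s2 2)
    convert this using 1
    field_simp
    linear_combination hDdef
  refine ⟨?_, ?_, ?_⟩
  · convert h₃.div_s2 hDinv using 1
    field_simp
  · convert h₂'.div_s2 hDinv using 1
    field_simp
  · convert h₁.div_s2 hDinv using 1
    field_simp

lemma ratDistSet_eq {P₁ P₂ P₃ : Plane} (hD : gramDet (P₃ - P₁) (P₃ - P₂) ≠ 0)
    (hA : IsRat (‖P₃ - P₁‖ ^ 2)) (hB : IsRat (⟪P₃ - P₁, P₃ - P₂⟫))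
    (hC : IsRat (‖P₃ - P₂‖ ^ 2)) :
    ratDistSet P₁ P₂ P₃ =
      {Q | ∃ x y : ℚ, Q = P₃ + (x : ℝ) • (P₃ - P₁) + (y : ℝ) • (P₃ - P₂)} := by
  have two : IsRat 2 := IsRat.ofNat 2
  ext Q
  constructor
  · rintro ⟨r₁, r₂, r₃⟩
    have ha : IsRat (⟪Q - P₃, P₃ - P₁⟫) := by
      convert ((r₁.sub_s2 r₃).sub_s2 hA).div_s2 two using 1
      rw [dist_sq_eq Q P₁ P₃]
      ring
    have hb : IsRat (⟪Q - P₃, P₃ - P₂⟫) := by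
      convert ((r₂.sub_s2 r₃).sub_s2 hC).div_s2 two using 1
      rw [dist_sq_eq Q P₂ P₃]
      ring
    have hDr : IsRat (gramDet (P₃ - P₁) (P₃ - P₂)) := (hA.mul_s2 hC).sub_s2 (hB.pow_s2 2)
    have hv := eq_cramer hD (Q - P₃)
    obtain ⟨x, hx⟩ := ((hC.mul_s2 ha).sub_s2 (hB.mul_s2 hb)).div_s2 hDr
    obtain ⟨y, hy⟩ := ((hA.mul_s2 hb).sub_s2 (hB.mul_s2 ha)).div_s2 hDr
    rw [← hx, ← hy] at hv
    exact ⟨x, y, by rw [add_assoc, ← hv, add_sub_cancel]⟩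
  · rintro ⟨x, y, rfl⟩
    have hx := IsRat.ratCast x
    have hy := IsRat.ratCast y
    have hv : P₃ + (x : ℝ) • (P₃ - P₁) + (y : ℝ) • (P₃ - P₂) - P₃ =
        (x : ℝ) • (P₃ - P₁) + (y : ℝ) • (P₃ - P₂) := by abel
    have r₃ : IsRat (dist (P₃ + (x : ℝ) • (P₃ - P₁) + (y : ℝ) • (P₃ - P₂)) P₃ ^ 2) := by
      convert (((hx.pow_s2 2).mul_s2 hA).add_s2 (((two.mul_s2 hx).mul_s2 hy).mul_s2 hB)).add_s2
        ((hy.pow_s2 2).mul_s2 hC) using 1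
      rw [dist_eq_norm, hv]
      simp only [plane_inner, plane_norm_sq, PiLp.add_apply, PiLp.smul_apply, smul_eq_mul]
      ring
    refine ⟨?_, ?_, r₃⟩
    · rw [dist_sq_eq _ P₁ P₃, hv, inner_add_left, real_inner_smul_left, real_inner_smul_left,
        real_inner_self_eq_norm_sq, real_inner_comm (P₃ - P₁) (P₃ - P₂)]
      exact r₃.add_s2 ((two.mul_s2 ((hx.mul_s2 hA).add_s2 (hy.mul_s2 hB))).add_s2 hA)
    · rw [dist_sq_eq _ P₂ P₃, hv, inner_add_left, real_inner_smul_left, real_inner_smul_left,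
        real_inner_self_eq_norm_sq]
      exact r₃.add_s2 ((two.mul_s2 ((hx.mul_s2 hB).add_s2 (hy.mul_s2 hC))).add_s2 hC)

/-- The points with rational coordinates in an affine frame are dense. -/
lemma dense_rat_combinations {u w : Plane} (hD : gramDet u w ≠ 0) (P : Plane) :
    Dense {Q : Plane | ∃ x y : ℚ, Q = P + (x : ℝ) • u + (y : ℝ) • w} := by
  let f : ℝ × ℝ → Plane := fun p => P + p.1 • u + p.2 • w
  have hf : Continuous f := by fun_prop
  have hsurj : Function.Surjective f := by
    intro Q
    refine ⟨((‖w‖ ^ 2 * ⟪Q - P, u⟫ - ⟪u, w⟫ * ⟪Q - P, w⟫) / gramDet u w,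
      (‖u‖ ^ 2 * ⟪Q - P, w⟫ - ⟪u, w⟫ * ⟪Q - P, u⟫) / gramDet u w), ?_⟩
    dsimp only [f]
    rw [add_assoc, ← eq_cramer hD (Q - P), add_sub_cancel]
  have hd : DenseRange (Prod.map ((↑) : ℚ → ℝ) ((↑) : ℚ → ℝ)) :=
    Rat.denseRange_cast.prodMap Rat.denseRange_cast
  refine (hsurj.denseRange.comp hd hf).mono ?_
  rintro _ ⟨⟨x, y⟩, rfl⟩
  exact ⟨x, y, rfl⟩

theorem rational_squared_distances_three_points
    (P₁ P₂ P₃ : EuclideanSpace ℝ (Fin 2))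
    (hna : LinearIndependent ℝ ![P₃ - P₁, P₃ - P₂]) :
    (Dense {Q : EuclideanSpace ℝ (Fin 2) |
        IsRat (dist Q P₁ ^ 2) ∧ IsRat (dist Q P₂ ^ 2) ∧ IsRat (dist Q P₃ ^ 2)} ↔
      (IsRat (‖P₃ - P₁‖ ^ 2) ∧ IsRat (⟪P₃ - P₁, P₃ - P₂⟫) ∧ IsRat (‖P₃ - P₂‖ ^ 2))) ∧
    ((IsRat (‖P₃ - P₁‖ ^ 2) ∧ IsRat (⟪P₃ - P₁, P₃ - P₂⟫) ∧ IsRat (‖P₃ - P₂‖ ^ 2)) ↔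
      (∀ i j : Fin 3, IsRat (dist (![P₁, P₂, P₃] i) (![P₁, P₂, P₃] j) ^ 2))) ∧
    ((IsRat (‖P₃ - P₁‖ ^ 2) ∧ IsRat (⟪P₃ - P₁, P₃ - P₂⟫) ∧ IsRat (‖P₃ - P₂‖ ^ 2)) →
      {Q : EuclideanSpace ℝ (Fin 2) |
          IsRat (dist Q P₁ ^ 2) ∧ IsRat (dist Q P₂ ^ 2) ∧ IsRat (dist Q P₃ ^ 2)} =
        {Q : EuclideanSpace ℝ (Fin 2) |
          ∃ x y : ℚ, Q = P₃ + (x : ℝ) • (P₃ - P₁) + (y : ℝ) • (P₃ - P₂)}) := by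
  have hD := gramDet_ne_zero hna
  have two : IsRat 2 := IsRat.ofNat 2
  have h12 : dist P₁ P₂ ^ 2 =
      ‖P₃ - P₁‖ ^ 2 - 2 * ⟪P₃ - P₁, P₃ - P₂⟫ + ‖P₃ - P₂‖ ^ 2 := by
    rw [← norm_sub_sq_real, dist_comm, dist_eq_norm, sub_sub_sub_cancel_left,
      norm_sub_rev]
  refine ⟨⟨gram_isRat_of_dense hD, ?_⟩, ⟨?_, ?_⟩, ?_⟩
  · rintro ⟨hA, hB, hC⟩
    have := dense_rat_combinations hD P₃
    rwa [← ratDistSet_eq hD hA hB hC] at this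
  · rintro ⟨hA, hB, hC⟩
    have r12 : IsRat (dist P₁ P₂ ^ 2) := h12 ▸ (hA.sub_s2 (two.mul_s2 hB)).add_s2 hC
    have r31 : IsRat (dist P₃ P₁ ^ 2) := by rwa [dist_eq_norm]
    have r32 : IsRat (dist P₃ P₂ ^ 2) := by rwa [dist_eq_norm]
    have r0 (P : Plane) : IsRat (dist P P ^ 2) := ⟨0, by simp⟩
    intro i j
    fin_cases i <;> fin_cases j
    exacts [r0 _, r12, dist_comm P₃ P₁ ▸ r31, dist_comm P₁ P₂ ▸ r12, r0 _,
      dist_comm P₃ P₂ ▸ r32, r31, r32, r0 _]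
  · intro h
    have r12 : IsRat (dist P₁ P₂ ^ 2) := h 0 1
    have r31 : IsRat (dist P₃ P₁ ^ 2) := h 2 0
    have r32 : IsRat (dist P₃ P₂ ^ 2) := h 2 1
    rw [dist_eq_norm] at r31 r32
    refine ⟨r31, ?_, r32⟩
    convert ((r31.add_s2 r32).sub_s2 r12).div_s2 two using 1
    rw [h12]
    ring
  · rintro ⟨hA, hB, hC⟩
    exact ratDistSet_eq hD hA hB hC
end
end

section
/- Let P₁, P₂, P₃ ∈ ℝ² be three non-aligned points, ordered so that the 2×2 real matrix T whose columns are P₃−P₁ and P₃−P₂ has positive determinant, and suppose T = A·D·U where A is an orthogonal 2×2 matrix, D is diagonal with positive diagonal entries d₁, d₂, and U is upper triangular with both diagonal entries equal to 1. Then the three numbers ‖P₃−P₁‖², ⟨P₃−P₁, P₃−P₂⟩, ‖P₃−P₂‖² are all rational if and only if d₁² and d₂² are rational and U has rational entries. -/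
/-!
Since `A` is orthogonal, the Gram matrix `Tᵀ * T` equals `Uᵀ * D ^ 2 * U`. With `u = U 0 1`,
its entries are `‖P₃ - P₁‖² = d₁²`, `⟪P₃ - P₁, P₃ - P₂⟫ = d₁² u` and
`‖P₃ - P₂‖² = d₁² u² + d₂²`. These formulas are polynomial in `d₁²`, `d₂²`, `u`, and since
`d₁² ≠ 0` they can be solved rationally for `d₁²`, `u`, `d₂²` in turn.
-/

open scoped RealInnerProductSpace
open Matrix

noncomputable section

/-- The Gram entries `g, h, k` are rational exactly when the triangular data `a, b, u` are. -/
theorem isRat_gram_iff_s3 {g h k a b u : ℝ} (ha : a ≠ 0)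
    (hg : g = a) (hh : h = a * u) (hk : k = a * u ^ 2 + b) :
    (IsRat g ∧ IsRat h ∧ IsRat k) ↔ (IsRat a ∧ IsRat b ∧ IsRat u) := by
  subst hg hh hk
  constructor
  · rintro ⟨⟨p, rfl⟩, ⟨q, hq⟩, ⟨r, hr⟩⟩
    have hu : u = q / p := by rw [hq]; field_simp
    refine ⟨⟨p, rfl⟩, ⟨r - p * (q / p) ^ 2, ?_⟩, ⟨q / p, ?_⟩⟩
    · push_cast
      rw [← hu, hr]
      ring
    · push_cast
      exact hu.symm
  · rintro ⟨⟨p, rfl⟩, ⟨q, rfl⟩, ⟨r, rfl⟩⟩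
    exact ⟨⟨p, rfl⟩, ⟨p * r, by push_cast; rfl⟩, ⟨p * r ^ 2 + q, by push_cast; rfl⟩⟩

theorem rational_gram_iff_iwasawa
    (P₁ P₂ P₃ : EuclideanSpace ℝ (Fin 2))
    (hna : LinearIndependent ℝ ![P₃ - P₁, P₃ - P₂])
    (T A D U : Matrix (Fin 2) (Fin 2) ℝ)
    (hT : T = Matrix.of fun i j => (![P₃ - P₁, P₃ - P₂] j) i)
    (hdet : 0 < T.det)
    (hTADU : T = A * D * U)
    (hA : Aᵀ * A = 1)
    (hD01 : D 0 1 = 0) (hD10 : D 1 0 = 0)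
    (hD0 : 0 < D 0 0) (hD1 : 0 < D 1 1)
    (hU00 : U 0 0 = 1) (hU11 : U 1 1 = 1) (hU10 : U 1 0 = 0) :
    ((IsRat (‖P₃ - P₁‖ ^ 2) ∧ IsRat (⟪P₃ - P₁, P₃ - P₂⟫) ∧ IsRat (‖P₃ - P₂‖ ^ 2)) ↔
      (IsRat ((D 0 0) ^ 2) ∧ IsRat ((D 1 1) ^ 2) ∧ IsRat (U 0 1))) := by
  have hGram : Tᵀ * T = Uᵀ * (Dᵀ * D) * U := by
    calc Tᵀ * T = Uᵀ * (Dᵀ * (Aᵀ * A) * D) * U := by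
          rw [hTADU]; simp only [Matrix.transpose_mul, Matrix.mul_assoc]
      _ = Uᵀ * (Dᵀ * D) * U := by rw [hA, Matrix.mul_one]
  have h00 := congrFun (congrFun hGram 0) 0
  have h01 := congrFun (congrFun hGram 0) 1
  have h11 := congrFun (congrFun hGram 1) 1
  simp only [hT, Matrix.mul_apply, Matrix.transpose_apply, Matrix.of_apply, Fin.sum_univ_two,
    Matrix.cons_val_zero, Matrix.cons_val_one, hD01, hD10, hU00, hU11, hU10] at h00 h01 h11
  refine isRat_gram_iff_s3 (pow_ne_zero 2 hD0.ne') ?_ ?_ ?_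
  · rw [EuclideanSpace.real_norm_sq_eq, Fin.sum_univ_two]
    linear_combination h00
  · simp only [PiLp.inner_apply, Fin.sum_univ_two, RCLike.inner_apply, conj_trivial]
    linear_combination h01
  · rw [EuclideanSpace.real_norm_sq_eq, Fin.sum_univ_two]
    linear_combination h11
end
end

section
/- Let P₁, P₂ be two distinct points of ℚ² ⊆ ℝ². Then the set of points Q ∈ ℚ² such that both Euclidean distances d(Q,P₁) and d(Q,P₂) are rational is dense in ℝ² for the Euclidean topology. -/
/-!
Identify `ℝ²` with `ℂ`. If `w ∈ ℚ(i)`, then `w²` has rational length `|w|²`, so each point of the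
line through `P₁` directed by `w²` that is a rational multiple of `w²` away from `P₁` is at rational
distance from `P₁`. Given `w, v ∈ ℚ(i)` with `w²`, `v²` not parallel, the line through `P₁` directed
by `w²` meets the line through `P₂` directed by `v²` in one point, which Cramer's rule expresses
rationally (`meet`, `meet_sub`); it therefore has rational coordinates and rational distances to
both `P₁` and `P₂` (`meet_mem`). No rationality of `d(P₁, P₂)` is needed.

A point `Q` off the line `P₁P₂` is the meeting point for `w = √(Q - P₁)` and `v = √(Q - P₂)`.
Approximating these complex square roots by elements of `ℚ(i)`, and using that the meeting point
depends continuously on `(w, v)`, shows that `Q` is a limit of points of the desired kind. The points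
off the line `P₁P₂` are themselves dense.
-/

noncomputable section

/-- The cross product of the squares of `w = p + qi` and `v = m + ni`, where `x = (p, q, m, n)`.
It vanishes iff `w²` and `v²` are parallel. -/
def sqCross (x : ℝ × ℝ × ℝ × ℝ) : ℝ :=
  (x.1 ^ 2 - x.2.1 ^ 2) * (2 * x.2.2.1 * x.2.2.2) -
    2 * x.1 * x.2.1 * (x.2.2.1 ^ 2 - x.2.2.2 ^ 2)

/-- For `x = (p, q, m, n)`, the point where the line through `P₁` directed by `(p + qi)²` meets the
line through `P₂` directed by `(m + ni)²`; a junk value when `sqCross x = 0`. -/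
def meet (P₁ P₂ : EuclideanSpace ℝ (Fin 2)) (x : ℝ × ℝ × ℝ × ℝ) : EuclideanSpace ℝ (Fin 2) :=
  !₂[P₁ 0 + ((P₂ 0 - P₁ 0) * (2 * x.2.2.1 * x.2.2.2) -
        (P₂ 1 - P₁ 1) * (x.2.2.1 ^ 2 - x.2.2.2 ^ 2)) / sqCross x * (x.1 ^ 2 - x.2.1 ^ 2),
     P₁ 1 + ((P₂ 0 - P₁ 0) * (2 * x.2.2.1 * x.2.2.2) -
        (P₂ 1 - P₁ 1) * (x.2.2.1 ^ 2 - x.2.2.2 ^ 2)) / sqCross x * (2 * x.1 * x.2.1)]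

/-- The meeting point also lies on the line through `P₂`, with an explicit rational parameter. -/
lemma meet_sub (P₁ P₂ : EuclideanSpace ℝ (Fin 2)) (x : ℝ × ℝ × ℝ × ℝ) (hx : sqCross x ≠ 0) :
    meet P₁ P₂ x 0 - P₂ 0 = ((P₂ 0 - P₁ 0) * (2 * x.1 * x.2.1) -
        (P₂ 1 - P₁ 1) * (x.1 ^ 2 - x.2.1 ^ 2)) / sqCross x * (x.2.2.1 ^ 2 - x.2.2.2 ^ 2) ∧
    meet P₁ P₂ x 1 - P₂ 1 = ((P₂ 0 - P₁ 0) * (2 * x.1 * x.2.1) -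
        (P₂ 1 - P₁ 1) * (x.1 ^ 2 - x.2.1 ^ 2)) / sqCross x * (2 * x.2.2.1 * x.2.2.2) := by
  constructor <;> simp [meet] <;> field_simp <;> simp only [sqCross] <;> ring

/-- A vector `c • (p + qi)²` has length `|c| (p² + q²)`. -/
lemma isRat_dist (Q P : EuclideanSpace ℝ (Fin 2)) (c p q : ℚ)
    (h0 : Q 0 - P 0 = c * ((p : ℝ) ^ 2 - q ^ 2)) (h1 : Q 1 - P 1 = c * (2 * p * q)) :
    IsRat (dist Q P) := by
  refine ⟨|c * (p ^ 2 + q ^ 2)|, ?_⟩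
  rw [EuclideanSpace.dist_eq, Fin.sum_univ_two, Real.dist_eq, Real.dist_eq, sq_abs, sq_abs, h0, h1,
    show ((c : ℝ) * ((p : ℝ) ^ 2 - q ^ 2)) ^ 2 + (c * (2 * p * q)) ^ 2 =
      (c * (p ^ 2 + q ^ 2)) ^ 2 by ring, Real.sqrt_sq_eq_abs]
  push_cast
  rfl

lemma meet_mem (P₁ P₂ : EuclideanSpace ℝ (Fin 2))
    (h₁ : ∀ i, IsRat (P₁ i)) (h₂ : ∀ i, IsRat (P₂ i)) (p q m n : ℚ)
    (hx : sqCross (p, q, m, n) ≠ 0) :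
    (∀ i, IsRat (meet P₁ P₂ (p, q, m, n) i)) ∧ IsRat (dist (meet P₁ P₂ (p, q, m, n)) P₁) ∧
      IsRat (dist (meet P₁ P₂ (p, q, m, n)) P₂) := by
  obtain ⟨a, ha⟩ := h₁ 0
  obtain ⟨b, hb⟩ := h₁ 1
  obtain ⟨c, hc⟩ := h₂ 0
  obtain ⟨d, hd⟩ := h₂ 1
  obtain ⟨k0, k1⟩ := meet_sub P₁ P₂ _ hx
  have hs : sqCross (p, q, m, n) =
      (((p ^ 2 - q ^ 2) * (2 * m * n) - 2 * p * q * (m ^ 2 - n ^ 2) : ℚ) : ℝ) := by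
    simp [sqCross]
  refine ⟨fun i => ?_, ?_, ?_⟩
  · fin_cases i
    · refine ⟨a + ((c - a) * (2 * m * n) - (d - b) * (m ^ 2 - n ^ 2)) /
        ((p ^ 2 - q ^ 2) * (2 * m * n) - 2 * p * q * (m ^ 2 - n ^ 2)) * (p ^ 2 - q ^ 2), ?_⟩
      simp [meet, hs, ← ha, ← hb, ← hc, ← hd]
    · refine ⟨b + ((c - a) * (2 * m * n) - (d - b) * (m ^ 2 - n ^ 2)) /
        ((p ^ 2 - q ^ 2) * (2 * m * n) - 2 * p * q * (m ^ 2 - n ^ 2)) * (2 * p * q), ?_⟩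
      simp [meet, hs, ← ha, ← hb, ← hc, ← hd]
  · apply isRat_dist _ _ (((c - a) * (2 * m * n) - (d - b) * (m ^ 2 - n ^ 2)) /
        ((p ^ 2 - q ^ 2) * (2 * m * n) - 2 * p * q * (m ^ 2 - n ^ 2))) p q <;>
      simp [meet, hs, ← ha, ← hb, ← hc, ← hd]
  · apply isRat_dist _ _ (((c - a) * (2 * p * q) - (d - b) * (p ^ 2 - q ^ 2)) /
        ((p ^ 2 - q ^ 2) * (2 * m * n) - 2 * p * q * (m ^ 2 - n ^ 2))) m n
    · rw [k0, hs, ← ha, ← hb, ← hc, ← hd]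
      push_cast
      rfl
    · rw [k1, hs, ← ha, ← hb, ← hc, ← hd]
      push_cast
      rfl

/-- Complex square roots, in real coordinates. -/
lemma exists_sq (x y : ℝ) : ∃ p q : ℝ, p ^ 2 - q ^ 2 = x ∧ 2 * p * q = y := by
  obtain ⟨z, hz⟩ := IsAlgClosed.exists_pow_nat_eq (⟨x, y⟩ : ℂ) (n := 2) (by norm_num)
  refine ⟨z.re, z.im, ?_, ?_⟩
  · have := congrArg Complex.re hz
    simp [pow_two] at this
    linarith
  · have := congrArg Complex.im hz
    simp [pow_two] at this
    linarith

/-- Points off the line `P₁P₂` are limits of points with the required rationality. -/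
lemma mem_closure_of_cross_ne_zero (P₁ P₂ Q : EuclideanSpace ℝ (Fin 2))
    (h₁ : ∀ i, IsRat (P₁ i)) (h₂ : ∀ i, IsRat (P₂ i))
    (hQ : (P₂ 0 - P₁ 0) * (Q 1 - P₁ 1) - (P₂ 1 - P₁ 1) * (Q 0 - P₁ 0) ≠ 0) :
    Q ∈ closure {Q : EuclideanSpace ℝ (Fin 2) |
      (∀ i, IsRat (Q i)) ∧ IsRat (dist Q P₁) ∧ IsRat (dist Q P₂)} := by
  obtain ⟨p, q, hA, hB⟩ := exists_sq (Q 0 - P₁ 0) (Q 1 - P₁ 1)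
  obtain ⟨m, n, hC, hE⟩ := exists_sq (Q 0 - P₂ 0) (Q 1 - P₂ 1)
  have hs : sqCross (p, q, m, n) =
      (P₂ 0 - P₁ 0) * (Q 1 - P₁ 1) - (P₂ 1 - P₁ 1) * (Q 0 - P₁ 0) := by
    simp only [sqCross, hA, hB, hC, hE]
    ring
  have hne : sqCross (p, q, m, n) ≠ 0 := hs ▸ hQ
  -- The coefficient of `(p + qi)²` in `meet` is `1`.
  have hc : ((P₂ 0 - P₁ 0) * (2 * m * n) - (P₂ 1 - P₁ 1) * (m ^ 2 - n ^ 2)) /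
      sqCross (p, q, m, n) = 1 := by
    rw [div_eq_one_iff_eq hne, hs, hC, hE]
    ring
  have hmeet : meet P₁ P₂ (p, q, m, n) = Q := by
    ext i
    fin_cases i
    · simp [meet, hc, hA]
    · simp [meet, hc, hB]
  have hcont : Continuous sqCross := by
    unfold sqCross
    fun_prop
  have hat : ContinuousAt (meet P₁ P₂) (p, q, m, n) := by
    unfold meet
    refine (PiLp.continuous_toLp 2 _).continuousAt.comp (continuousAt_pi.2 fun i => ?_)
    fin_cases i
    · simp only [Fin.zero_eta, Matrix.cons_val_zero]
      fun_prop (disch := exact hne)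
    · simp only [Fin.mk_one, Matrix.cons_val_one, Matrix.cons_val_zero]
      fun_prop (disch := exact hne)
  have hd : DenseRange (Prod.map ((↑) : ℚ → ℝ)
      (Prod.map ((↑) : ℚ → ℝ) (Prod.map ((↑) : ℚ → ℝ) ((↑) : ℚ → ℝ)))) :=
    Rat.denseRange_cast.prodMap (Rat.denseRange_cast.prodMap
      (Rat.denseRange_cast.prodMap Rat.denseRange_cast))
  have hmem := hd.open_subset_closure_inter (isOpen_ne.preimage hcont)
    (show (p, q, m, n) ∈ sqCross ⁻¹' {y | y ≠ 0} from hne)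
  have := hat.continuousWithinAt.mem_closure_image hmem
  rw [hmeet] at this
  refine closure_mono ?_ this
  rintro _ ⟨_, ⟨hx, ⟨⟨p', q', m', n'⟩, rfl⟩⟩, rfl⟩
  exact meet_mem P₁ P₂ h₁ h₂ p' q' m' n' hx

theorem rational_points_rational_distances_two_points_dense
    (P₁ P₂ : EuclideanSpace ℝ (Fin 2))
    (h₁ : ∀ i, IsRat (P₁ i)) (h₂ : ∀ i, IsRat (P₂ i)) (hne : P₁ ≠ P₂) :
    Dense {Q : EuclideanSpace ℝ (Fin 2) |
      (∀ i, IsRat (Q i)) ∧ IsRat (dist Q P₁) ∧ IsRat (dist Q P₂)} := by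
  intro Q
  have hN : (P₂ 0 - P₁ 0) ^ 2 + (P₂ 1 - P₁ 1) ^ 2 ≠ 0 := by
    intro h
    apply hne
    ext i
    fin_cases i
    · simp only [Fin.zero_eta]
      nlinarith [sq_nonneg (P₂ 0 - P₁ 0), sq_nonneg (P₂ 1 - P₁ 1)]
    · simp only [Fin.mk_one]
      nlinarith [sq_nonneg (P₂ 0 - P₁ 0), sq_nonneg (P₂ 1 - P₁ 1)]
  -- Move `Q` along the normal of the line `P₁P₂`: a single parameter `t` puts it on the line.
  let f : ℝ → EuclideanSpace ℝ (Fin 2) := fun t => Q + t • !₂[-(P₂ 1 - P₁ 1), P₂ 0 - P₁ 0]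
  have hf : Continuous f := by fun_prop
  have hf0 : f 0 = Q := by simp [f]
  let t₀ : ℝ := -((P₂ 0 - P₁ 0) * (Q 1 - P₁ 1) - (P₂ 1 - P₁ 1) * (Q 0 - P₁ 0)) /
    ((P₂ 0 - P₁ 0) ^ 2 + (P₂ 1 - P₁ 1) ^ 2)
  have h := hf.continuousAt.continuousWithinAt.mem_closure_image (dense_compl_singleton t₀ 0)
  rw [hf0] at h
  refine closure_minimal ?_ isClosed_closure h
  rintro _ ⟨t, ht, rfl⟩
  refine mem_closure_of_cross_ne_zero P₁ P₂ _ h₁ h₂ fun h0 => ht ?_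
  simp only [Set.mem_singleton_iff, t₀]
  rw [eq_div_iff hN]
  simp [f] at h0
  linarith
end
end

section
/- Let O ∈ ℚ² be a rational point of the plane and let l = { (x,y) ∈ ℝ² : a·x + b·y = c } with a, b, c ∈ ℚ and (a,b) ≠ (0,0) be a line defined over ℚ not passing through O. Then the set of points Q ∈ l with both coordinates rational and with d(O,Q) ∈ ℚ is infinite. -/
/-!
For rational `m` the direction `(1 - m², 2m)` has the rational length `1 + m²`. The line through `O`
in this direction meets `l`, unless it is parallel to `l`, in the rational point
`O + t (1 - m², 2m)` with `t = k / (a (1 - m²) + 2 b m)`, where `k = c - a O₀ - b O₁ ≠ 0`; its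
distance to `O` is `|t| (1 + m²)`, which is rational. The denominator is a nonzero polynomial of
degree at most two in `m`, so infinitely many natural numbers `m` are admissible, and since two
directions are parallel only when `m = m'` or `m m' = -1`, distinct natural numbers give distinct
points.
-/

noncomputable section

/-- Three consecutive values of a nonzero polynomial of degree at most two cannot all vanish. -/
lemma infinite_setOf_denom_ne_zero (a b : ℚ) (hab : (a, b) ≠ (0, 0)) :
    {m : ℕ | a * (1 - (m : ℚ) ^ 2) + 2 * b * m ≠ 0}.Infinite := by
  refine Set.infinite_of_forall_exists_gt fun n => ?_
  by_contra! h
  have key : ∀ j : ℕ, n < j → a * (1 - (j : ℚ) ^ 2) + 2 * b * j = 0 := by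
    intro j hj
    by_contra hne
    exact absurd (h j hne) (by omega)
  have h1 := key (n + 1) (by omega)
  have h2 := key (n + 2) (by omega)
  have h3 := key (n + 3) (by omega)
  push_cast at h1 h2 h3
  -- The second difference of the polynomial is `-2 a`.
  have ha : a = 0 := by linear_combination (-1 / 2) * (h1 - 2 * h2 + h3)
  have hb : b = 0 := by
    rw [ha] at h1 h2
    linear_combination (1 / 2) * (h2 - h1)
  exact hab (by rw [ha, hb])

theorem infinitely_many_rational_points_on_line_with_rational_distance
    (O : EuclideanSpace ℝ (Fin 2)) (hO : ∀ i, IsRat (O i))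
    (a b c : ℚ) (hab : (a, b) ≠ (0, 0))
    (hOl : (a : ℝ) * O 0 + (b : ℝ) * O 1 ≠ (c : ℝ)) :
    {Q : EuclideanSpace ℝ (Fin 2) |
      (a : ℝ) * Q 0 + (b : ℝ) * Q 1 = (c : ℝ) ∧ (∀ i, IsRat (Q i)) ∧
        IsRat (dist O Q)}.Infinite := by
  obtain ⟨p, hp⟩ := hO 0
  obtain ⟨q, hq⟩ := hO 1
  have hk : c - a * p - b * q ≠ 0 := by
    intro h
    apply hOl
    rw [← hp, ← hq]
    have h' : a * p + b * q = c := by linear_combination -h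
    exact_mod_cast h'
  let t : ℕ → ℚ := fun m => (c - a * p - b * q) / (a * (1 - (m : ℚ) ^ 2) + 2 * b * m)
  let f : ℕ → EuclideanSpace ℝ (Fin 2) := fun m =>
    !₂[((p + t m * (1 - (m : ℚ) ^ 2) : ℚ) : ℝ), ((q + t m * (2 * m) : ℚ) : ℝ)]
  refine Set.infinite_of_injOn_mapsTo (f := f) ?_ ?_ (infinite_setOf_denom_ne_zero a b hab)
  · intro m hm n hn hmn
    have h0 : f m 0 = f n 0 := by rw [hmn]
    have h1 : f m 1 = f n 1 := by rw [hmn]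
    simp only [f, Matrix.cons_val_zero, Matrix.cons_val_one, Rat.cast_inj] at h0 h1
    have htm : t m ≠ 0 := div_ne_zero hk hm
    have htn : t n ≠ 0 := div_ne_zero hk hn
    -- The cross product of the two directions factors as `2 (n - m) (1 + m n)`.
    have hprod : t m * t n * (((n : ℚ) - m) * (1 + m * n)) = 0 := by
      linear_combination (t n * n) * h0 - (t n * (1 - (n : ℚ) ^ 2) / 2) * h1
    have hpos : (1 + (m : ℚ) * n) ≠ 0 := by positivity
    have := (mul_eq_zero.1 hprod).resolve_left (mul_ne_zero htm htn)
    have := (mul_eq_zero.1 this).resolve_right hpos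
    exact_mod_cast (sub_eq_zero.1 this).symm
  · intro m hm
    have ht : t m * (a * (1 - (m : ℚ) ^ 2) + 2 * b * m) = c - a * p - b * q :=
      div_mul_cancel₀ _ hm
    refine ⟨?_, ?_, ?_⟩
    · have h : a * (p + t m * (1 - (m : ℚ) ^ 2)) + b * (q + t m * (2 * m)) = c := by
        linear_combination ht
      simp only [f, Matrix.cons_val_zero, Matrix.cons_val_one]
      exact_mod_cast h
    · intro i
      fin_cases i
      · exact ⟨_, rfl⟩
      · exact ⟨_, rfl⟩
    · refine ⟨|t m * (1 + (m : ℚ) ^ 2)|, ?_⟩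
      rw [EuclideanSpace.dist_eq, Fin.sum_univ_two, Real.dist_eq, Real.dist_eq, sq_abs, sq_abs,
        ← hp, ← hq, Rat.cast_abs, ← Real.sqrt_sq_eq_abs]
      congr 1
      simp only [f, Matrix.cons_val_zero, Matrix.cons_val_one]
      push_cast
      ring
end
end

section
/- Let O be the origin of ℝ², let P ∈ ℝ² with P ≠ O, let q ∈ ℝ with q ≠ 0 and q ≠ 1, and set P' = q·P (so O, P, P' are collinear). Let J = { Q ∈ ℝ² : ‖Q‖² ∈ ℚ, ‖Q−P‖² ∈ ℚ, ‖Q−P'‖² ∈ ℚ }. Then J is Zariski-dense in ℝ² if and only if ‖P‖² ∈ ℚ and q ∈ ℚ. Moreover, under these conditions, writing P = (a,b), R = (−b,a), every Q ∈ ℝ² equals t·P + u·R with t = ⟨P,Q⟩/‖P‖² and u = ⟨R,Q⟩/‖P‖², and Q ∈ J if and only if t ∈ ℚ and u² ∈ ℚ. -/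
/-!
Write `N = ‖P‖²` and `s = ⟪P, Q⟫`. Subtracting squared distances shows that `Q ∈ J` iff the
numbers `‖Q‖²`, `A = 2s - N` and `B = 2qs - q²N = q (A + (1 - q) N)` are all rational
(`mem_iff`).

If `J` is Zariski-dense, it is not contained in a line `⟪P, Q⟫ = const`, so it has two points with
different values of `s` (`exists_inner_ne`). The quotient of the differences of `B` and of `A`
is `q`, so `q` is rational, and then so is `N`, because `q ≠ 0` and `q ≠ 1`.

Conversely, let `N` and `q` be rational. In the orthogonal basis `P, R` one has `s = t N` and
`‖Q‖² = N (t² + u²)`, which gives the description of `J` by `t` and `u²`. In particular `J`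
contains all rational combinations of `P` and `R`; these are topologically dense in the plane, and
polynomials are continuous, so a polynomial vanishing on `J` vanishes everywhere.
-/

open scoped RealInnerProductSpace

noncomputable section

/-- A subset of the plane is Zariski-dense if the only real polynomial in two
variables vanishing identically on it is the zero polynomial. -/
def ZariskiDense (S : Set (EuclideanSpace ℝ (Fin 2))) : Prop :=
  ∀ f : MvPolynomial (Fin 2) ℝ,
    (∀ Q ∈ S, MvPolynomial.eval (fun i => Q i) f = 0) → f = 0

namespace IsRat

theorem add_s6 {x y : ℝ} : IsRat x → IsRat y → IsRat (x + y) := by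
  rintro ⟨a, rfl⟩ ⟨b, rfl⟩; exact ⟨a + b, by push_cast; rfl⟩

theorem sub_s6 {x y : ℝ} : IsRat x → IsRat y → IsRat (x - y) := by
  rintro ⟨a, rfl⟩ ⟨b, rfl⟩; exact ⟨a - b, by push_cast; rfl⟩

theorem mul_s6 {x y : ℝ} : IsRat x → IsRat y → IsRat (x * y) := by
  rintro ⟨a, rfl⟩ ⟨b, rfl⟩; exact ⟨a * b, by push_cast; rfl⟩

theorem div_s6 {x y : ℝ} : IsRat x → IsRat y → IsRat (x / y) := by
  rintro ⟨a, rfl⟩ ⟨b, rfl⟩; exact ⟨a / b, by push_cast; rfl⟩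

theorem ratCast_s6 (a : ℚ) : IsRat (a : ℝ) := ⟨a, rfl⟩

theorem one : IsRat 1 := ⟨1, by simp⟩

theorem two : IsRat 2 := ⟨2, by simp⟩

end IsRat

theorem norm_sq_coord (Q : EuclideanSpace ℝ (Fin 2)) : ‖Q‖ ^ 2 = Q 0 ^ 2 + Q 1 ^ 2 := by
  simp [EuclideanSpace.real_norm_sq_eq, Fin.sum_univ_two]

theorem inner_coord (P Q : EuclideanSpace ℝ (Fin 2)) : ⟪P, Q⟫ = P 0 * Q 0 + P 1 * Q 1 := by
  simp [PiLp.inner_apply, Fin.sum_univ_two, mul_comm]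

/-- Differences of squared distances are affine in `⟪P, Q⟫`. -/
theorem mem_iff (P Q : EuclideanSpace ℝ (Fin 2)) (q : ℝ) :
    (IsRat (‖Q‖ ^ 2) ∧ IsRat (‖Q - P‖ ^ 2) ∧ IsRat (‖Q - q • P‖ ^ 2)) ↔
    (IsRat (‖Q‖ ^ 2) ∧ IsRat (2 * ⟪P, Q⟫ - ‖P‖ ^ 2) ∧
      IsRat (2 * q * ⟪P, Q⟫ - q ^ 2 * ‖P‖ ^ 2)) := by
  have e1 : ‖Q - P‖ ^ 2 = ‖Q‖ ^ 2 - (2 * ⟪P, Q⟫ - ‖P‖ ^ 2) := by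
    simp only [norm_sq_coord, inner_coord, PiLp.sub_apply]; ring
  have e2 : ‖Q - q • P‖ ^ 2 = ‖Q‖ ^ 2 - (2 * q * ⟪P, Q⟫ - q ^ 2 * ‖P‖ ^ 2) := by
    simp only [norm_sq_coord, inner_coord, PiLp.sub_apply, PiLp.smul_apply, smul_eq_mul]; ring
  rw [e1, e2]
  constructor
  · rintro ⟨h0, h1, h2⟩
    exact ⟨h0, by simpa using h0.sub_s6 h1, by simpa using h0.sub_s6 h2⟩
  · rintro ⟨h0, h1, h2⟩
    exact ⟨h0, h0.sub_s6 h1, h0.sub_s6 h2⟩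

/-- A Zariski-dense set is neither empty nor contained in a line orthogonal to `P`. -/
theorem exists_inner_ne {J : Set (EuclideanSpace ℝ (Fin 2))} (hJ : ZariskiDense J)
    {P : EuclideanSpace ℝ (Fin 2)} (hP : P ≠ 0) :
    ∃ Q₁ ∈ J, ∃ Q₂ ∈ J, ⟪P, Q₁⟫ ≠ ⟪P, Q₂⟫ := by
  by_contra! h
  obtain ⟨s, hs⟩ : ∃ s : ℝ, ∀ Q ∈ J, ⟪P, Q⟫ = s := by
    rcases J.eq_empty_or_nonempty with rfl | ⟨Q₀, h₀⟩
    · exact ⟨0, by simp⟩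
    · exact ⟨⟪P, Q₀⟫, fun Q hQ => h Q hQ Q₀ h₀⟩
  have hf := hJ (MvPolynomial.C (P 0) * MvPolynomial.X 0 +
    MvPolynomial.C (P 1) * MvPolynomial.X 1 - MvPolynomial.C s) (fun Q hQ => by
      have := hs Q hQ
      rw [inner_coord] at this
      simp [this])
  -- The zero polynomial vanishes at the origin and at `P`, so `s = 0` and `‖P‖² = s`.
  have h0 := congrArg (MvPolynomial.eval (fun _ => (0 : ℝ))) hf
  have h1 := congrArg (MvPolynomial.eval (fun i => P i)) hf
  simp only [map_sub, map_add, map_mul, MvPolynomial.eval_C, MvPolynomial.eval_X, map_zero]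
    at h0 h1
  have hN : ‖P‖ ^ 2 = 0 := by rw [norm_sq_coord]; linarith
  exact hP (by simpa using hN)

theorem isRat_of_zariskiDense {P : EuclideanSpace ℝ (Fin 2)} (hP : P ≠ 0) {q : ℝ}
    (hq0 : q ≠ 0) (hq1 : q ≠ 1)
    (h : ZariskiDense {Q : EuclideanSpace ℝ (Fin 2) |
      IsRat (‖Q‖ ^ 2) ∧ IsRat (‖Q - P‖ ^ 2) ∧ IsRat (‖Q - q • P‖ ^ 2)}) :
    IsRat (‖P‖ ^ 2) ∧ IsRat q := by
  obtain ⟨Q₁, h₁, Q₂, h₂, hne⟩ := exists_inner_ne h hP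
  obtain ⟨-, a₁, b₁⟩ := (mem_iff P Q₁ q).1 h₁
  obtain ⟨-, a₂, b₂⟩ := (mem_iff P Q₂ q).1 h₂
  have hd : ⟪P, Q₁⟫ - ⟪P, Q₂⟫ ≠ 0 := sub_ne_zero.2 hne
  have hq : IsRat q := by
    convert (b₁.sub_s6 b₂).div_s6 (a₁.sub_s6 a₂) using 1
    rw [eq_div_iff]
    · ring
    · intro h0; apply hd; linarith
  refine ⟨?_, hq⟩
  have h1q : 1 - q ≠ 0 := sub_ne_zero.2 hq1.symm
  -- `B = q (A + (1 - q) N)` is solved for `N`.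
  convert ((b₁.div_s6 hq).sub_s6 a₁).div_s6 (IsRat.one.sub_s6 hq) using 1
  field_simp
  ring

theorem decomposition {P R : EuclideanSpace ℝ (Fin 2)} (hP : P ≠ 0) (hR0 : R 0 = -(P 1))
    (hR1 : R 1 = P 0) (Q : EuclideanSpace ℝ (Fin 2)) :
    Q = (⟪P, Q⟫ / ‖P‖ ^ 2) • P + (⟪R, Q⟫ / ‖P‖ ^ 2) • R := by
  have hN : P 0 ^ 2 + P 1 ^ 2 ≠ 0 := by
    rw [← norm_sq_coord]; simpa using hP
  ext i
  fin_cases i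
  · simp only [Fin.zero_eta, PiLp.add_apply, PiLp.smul_apply, smul_eq_mul, norm_sq_coord,
      inner_coord, hR0, hR1]
    field_simp
    ring
  · simp only [Fin.mk_one, PiLp.add_apply, PiLp.smul_apply, smul_eq_mul, norm_sq_coord,
      inner_coord, hR0, hR1]
    field_simp
    ring

theorem mem_iff_coordinates {P R : EuclideanSpace ℝ (Fin 2)} (hP : P ≠ 0) {q : ℝ}
    (hN : IsRat (‖P‖ ^ 2)) (hq : IsRat q) (hR0 : R 0 = -(P 1)) (hR1 : R 1 = P 0)
    (Q : EuclideanSpace ℝ (Fin 2)) :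
    (IsRat (‖Q‖ ^ 2) ∧ IsRat (‖Q - P‖ ^ 2) ∧ IsRat (‖Q - q • P‖ ^ 2)) ↔
      (IsRat (⟪P, Q⟫ / ‖P‖ ^ 2) ∧ IsRat ((⟪R, Q⟫ / ‖P‖ ^ 2) ^ 2)) := by
  rw [mem_iff]
  have hN0 : ‖P‖ ^ 2 ≠ 0 := by simpa using hP
  have hs : ⟪P, Q⟫ = ⟪P, Q⟫ / ‖P‖ ^ 2 * ‖P‖ ^ 2 := (div_mul_cancel₀ _ hN0).symm
  have hx : ‖Q‖ ^ 2 = ‖P‖ ^ 2 * ((⟪P, Q⟫ / ‖P‖ ^ 2) * (⟪P, Q⟫ / ‖P‖ ^ 2) +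
      (⟪R, Q⟫ / ‖P‖ ^ 2) ^ 2) := by
    rw [norm_sq_coord] at hN0
    simp only [norm_sq_coord, inner_coord, hR0, hR1]
    field_simp
    ring
  constructor
  · rintro ⟨h0, h1, -⟩
    have ht : IsRat (⟪P, Q⟫ / ‖P‖ ^ 2) := by
      convert ((h1.add_s6 hN).div_s6 IsRat.two).div_s6 hN using 2
      ring
    refine ⟨ht, ?_⟩
    convert (h0.div_s6 hN).sub_s6 (ht.mul_s6 ht) using 1
    rw [hx, mul_div_cancel_left₀ _ hN0]
    ring
  · rintro ⟨ht, hu⟩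
    have hsr : IsRat ⟪P, Q⟫ := by rw [hs]; exact ht.mul_s6 hN
    refine ⟨?_, (IsRat.two.mul_s6 hsr).sub_s6 hN, ((IsRat.two.mul_s6 hq).mul_s6 hsr).sub_s6 ?_⟩
    · rw [hx]; exact hN.mul_s6 ((ht.mul_s6 ht).add_s6 hu)
    · rw [pow_two]; exact (hq.mul_s6 hq).mul_s6 hN

/-- The rational combinations of a basis `P, R` are topologically dense in the plane, so a
polynomial vanishing on them vanishes identically. -/
theorem eq_zero_of_rational_combinations {P R : EuclideanSpace ℝ (Fin 2)} (hP : P ≠ 0)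
    (hR0 : R 0 = -(P 1)) (hR1 : R 1 = P 0) (f : MvPolynomial (Fin 2) ℝ)
    (hf : ∀ t u : ℚ, MvPolynomial.eval (fun i => ((t : ℝ) • P + (u : ℝ) • R) i) f = 0) :
    f = 0 := by
  have hdense : DenseRange (Prod.map ((↑) : ℚ → ℝ) ((↑) : ℚ → ℝ)) :=
    Rat.denseRange_cast.prodMap Rat.denseRange_cast
  have hcont : Continuous fun z : ℝ × ℝ =>
      MvPolynomial.eval (fun i => (z.1 • P + z.2 • R) i) f := by
    refine (MvPolynomial.continuous_eval f).comp ?_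
    simp only [PiLp.add_apply, PiLp.smul_apply, smul_eq_mul]
    fun_prop
  have hzero := hdense.equalizer hcont continuous_const (funext fun z => hf z.1 z.2)
  refine MvPolynomial.funext fun v => ?_
  have hv := decomposition hP hR0 hR1 (WithLp.toLp 2 v)
  have h := congrFun hzero
    (⟪P, WithLp.toLp 2 v⟫ / ‖P‖ ^ 2, ⟪R, WithLp.toLp 2 v⟫ / ‖P‖ ^ 2)
  simp only at h
  rw [← hv] at h
  simpa using h

theorem zariskiDense_of_isRat {P : EuclideanSpace ℝ (Fin 2)} (hP : P ≠ 0) {q : ℝ}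
    (hN : IsRat (‖P‖ ^ 2)) (hq : IsRat q) :
    ZariskiDense {Q : EuclideanSpace ℝ (Fin 2) |
      IsRat (‖Q‖ ^ 2) ∧ IsRat (‖Q - P‖ ^ 2) ∧ IsRat (‖Q - q • P‖ ^ 2)} := by
  intro f hf
  obtain ⟨R, hR0, hR1⟩ : ∃ R : EuclideanSpace ℝ (Fin 2), R 0 = -(P 1) ∧ R 1 = P 0 :=
    ⟨!₂[-(P 1), P 0], by simp, by simp⟩
  refine eq_zero_of_rational_combinations hP hR0 hR1 f fun t u => hf _ ?_
  have hN0 : P 0 ^ 2 + P 1 ^ 2 ≠ 0 := by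
    rw [← norm_sq_coord]; simpa using hP
  have ht : ⟪P, (t : ℝ) • P + (u : ℝ) • R⟫ / ‖P‖ ^ 2 = t := by
    simp only [norm_sq_coord, inner_coord, PiLp.add_apply, PiLp.smul_apply, smul_eq_mul, hR0, hR1]
    field_simp
    ring
  have hu : ⟪R, (t : ℝ) • P + (u : ℝ) • R⟫ / ‖P‖ ^ 2 = u := by
    simp only [norm_sq_coord, inner_coord, PiLp.add_apply, PiLp.smul_apply, smul_eq_mul, hR0, hR1]
    field_simp
    ring
  refine (mem_iff_coordinates hP hN hq hR0 hR1 _).2 ?_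
  rw [ht, hu, pow_two]
  exact ⟨.ratCast t, (IsRat.ratCast_s6 u).mul_s6 (.ratCast u)⟩


theorem rational_squared_distances_collinear_case
    (P : EuclideanSpace ℝ (Fin 2)) (hP : P ≠ 0)
    (q : ℝ) (hq0 : q ≠ 0) (hq1 : q ≠ 1)
    (P' : EuclideanSpace ℝ (Fin 2)) (hP' : P' = q • P)
    (J : Set (EuclideanSpace ℝ (Fin 2)))
    (hJ : J = {Q : EuclideanSpace ℝ (Fin 2) |
      IsRat (‖Q‖ ^ 2) ∧ IsRat (‖Q - P‖ ^ 2) ∧ IsRat (‖Q - P'‖ ^ 2)}) :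
    (ZariskiDense J ↔ (IsRat (‖P‖ ^ 2) ∧ IsRat q)) ∧
    ((IsRat (‖P‖ ^ 2) ∧ IsRat q) →
      ∀ R : EuclideanSpace ℝ (Fin 2), R 0 = -(P 1) → R 1 = P 0 →
      ∀ Q : EuclideanSpace ℝ (Fin 2),
        Q = (⟪P, Q⟫ / ‖P‖ ^ 2) • P + (⟪R, Q⟫ / ‖P‖ ^ 2) • R ∧
        (Q ∈ J ↔ (IsRat (⟪P, Q⟫ / ‖P‖ ^ 2) ∧ IsRat ((⟪R, Q⟫ / ‖P‖ ^ 2) ^ 2)))) := by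
  subst hP' hJ
  refine ⟨⟨isRat_of_zariskiDense hP hq0 hq1, fun h => zariskiDense_of_isRat hP h.1 h.2⟩, ?_⟩
  intro h R hR0 hR1 Q
  exact ⟨decomposition hP hR0 hR1 Q, mem_iff_coordinates hP h.1 h.2 hR0 hR1 Q⟩
end
end
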